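/- arXiv:1912.09432 — 5 statements merged into one kernel-verified Lean document; each statement's English description precedes it below -/
import Mathlib

section
/- Fix α, β ≥ 0 and define F(t₁,t₂) := E[exp(−α H₁(t₁) − β H₂(t₂))]. Then for all t₁, t₂ > 0 with t₁ ≠ t₂, both partial derivatives of F exist at (t₁,t₂) and satisfy (∂F/∂t₁)(t₁,t₂) + (∂F/∂t₂)(t₁,t₂) = −S(α,β)·F(t₁,t₂). -/
open MeasureTheory ProbabilityTheory

/-!
For `s ≤ t` the vector `(H₁(s), H₂(t))` is `(H₁(s), H₂(s))` plus the second coordinate of the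
increment over `[s, t]`, which is independent of the past. Hence `F(s, t)` is the exponential of
`-(t - s) S(0, β) - s S(α, β)`, and symmetrically `F(t, s)` is the exponential of
`-(t - s) S(α, 0) - s S(α, β)`. Both exponents are affine, and moving the two times together keeps
`t - s` fixed, so only the term `-s S(α, β)` contributes to the sum of the partial derivatives.
-/

open Filter Real
open scoped Topology

section Calculus

theorem hasDerivAt_of_eventuallyEq_exp {f g : ℝ → ℝ} {a x : ℝ}
    (hf : f =ᶠ[𝓝 x] fun u => exp (g u)) (hg : HasDerivAt g a x) :
    HasDerivAt f (a * f x) x := by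
  rw [hf.eq_of_nhds, mul_comm]
  exact hg.exp.congr_of_eventuallyEq hf

theorem hasDerivAt_of_eq_exp_lower_time {f : ℝ → ℝ} {κ σ s t : ℝ} (hs : 0 < s) (hst : s < t)
    (hf : ∀ u, 0 < u → u < t → f u = exp (-(t - u) * κ + -u * σ)) :
    HasDerivAt f ((κ - σ) * f s) s := by
  refine hasDerivAt_of_eventuallyEq_exp (g := fun u => -(t - u) * κ + -u * σ) ?_ ?_
  · filter_upwards [Ioo_mem_nhds hs hst] with u hu using hf u hu.1 hu.2
  · exact ((((hasDerivAt_id' s).const_sub t).neg.mul_const κ).add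
      ((hasDerivAt_id' s).neg.mul_const σ)).congr_deriv (by ring)

theorem hasDerivAt_of_eq_exp_upper_time {f : ℝ → ℝ} {κ c s t : ℝ} (hst : s < t)
    (hf : ∀ v, s < v → f v = exp (-(v - s) * κ + c)) :
    HasDerivAt f (-κ * f t) t := by
  refine hasDerivAt_of_eventuallyEq_exp (g := fun v => -(v - s) * κ + c) ?_ ?_
  · filter_upwards [Ioi_mem_nhds hst] with v hv using hf v hv
  · exact ((((hasDerivAt_id' t).sub_const s).neg.mul_const κ).add_const c).congr_deriv (by ring)

end Calculus

section Laplace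

variable {Ω : Type*} [MeasurableSpace Ω] {P : Measure Ω}

/-- The bivariate Laplace transform `E[exp(-aX - bY)]` of the random vector `(X, Y)`. As a Bochner
integral, it is `0` when the expectation is infinite. -/
noncomputable def bivariateLaplace (P : Measure Ω) (X Y : Ω → ℝ) (a b : ℝ) : ℝ :=
  ∫ ω, exp (-(a * X ω) - b * Y ω) ∂P

theorem integral_exp_mul_exp_eq_bivariateLaplace_mul {U₁ U₂ V₁ V₂ : Ω → ℝ}
    (hU₁ : AEMeasurable U₁ P) (hU₂ : AEMeasurable U₂ P)
    (hV₁ : AEMeasurable V₁ P) (hV₂ : AEMeasurable V₂ P)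
    (hUV : IndepFun (fun ω => (U₁ ω, U₂ ω)) (fun ω => (V₁ ω, V₂ ω)) P) (a b c d : ℝ) :
    ∫ ω, exp (-(a * U₁ ω) - b * U₂ ω) * exp (-(c * V₁ ω) - d * V₂ ω) ∂P =
      bivariateLaplace P U₁ U₂ a b * bivariateLaplace P V₁ V₂ c d := by
  have measurable_kernel (p q : ℝ) : Measurable fun z : ℝ × ℝ => exp (-(p * z.1) - q * z.2) := by
    fun_prop
  exact (hUV.comp (measurable_kernel a b) (measurable_kernel c d)).integral_fun_mul_eq_mul_integral
    ((measurable_kernel a b).comp_aemeasurable (hU₁.prodMk hU₂)).aestronglyMeasurable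
    ((measurable_kernel c d).comp_aemeasurable (hV₁.prodMk hV₂)).aestronglyMeasurable

section IndepIncrement

variable {X Y X' Y' : Ω → ℝ}

theorem bivariateLaplace_snd_eq_mul_of_indepFun_sub
    (hX : AEMeasurable X P) (hY : AEMeasurable Y P)
    (hX' : AEMeasurable X' P) (hY' : AEMeasurable Y' P)
    (hindep : IndepFun (fun ω => (X' ω - X ω, Y' ω - Y ω)) (fun ω => (X ω, Y ω)) P) (a b : ℝ) :
    bivariateLaplace P X Y' a b =
      bivariateLaplace P (X' - X) (Y' - Y) 0 b * bivariateLaplace P X Y a b := by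
  rw [← integral_exp_mul_exp_eq_bivariateLaplace_mul (hX'.sub hX) (hY'.sub hY) hX hY hindep]
  refine integral_congr_ae (.of_forall fun ω => ?_)
  simp only [← exp_add, Pi.sub_apply]
  ring_nf

theorem bivariateLaplace_fst_eq_mul_of_indepFun_sub
    (hX : AEMeasurable X P) (hY : AEMeasurable Y P)
    (hX' : AEMeasurable X' P) (hY' : AEMeasurable Y' P)
    (hindep : IndepFun (fun ω => (X' ω - X ω, Y' ω - Y ω)) (fun ω => (X ω, Y ω)) P) (a b : ℝ) :
    bivariateLaplace P X' Y a b =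
      bivariateLaplace P (X' - X) (Y' - Y) a 0 * bivariateLaplace P X Y a b := by
  rw [← integral_exp_mul_exp_eq_bivariateLaplace_mul (hX'.sub hX) (hY'.sub hY) hX hY hindep]
  refine integral_congr_ae (.of_forall fun ω => ?_)
  simp only [← exp_add, Pi.sub_apply]
  ring_nf

end IndepIncrement

/-- `κ` is the Laplace exponent at `(a, b)` of the increments of `(H₁, H₂)`: the increment over
`[s, t]` has Laplace transform `exp(-(t - s)κ)` there. Since this value is nonzero, the
expectation is finite. -/
def HasIncrementExponent (P : Measure Ω) (H₁ H₂ : ℝ → Ω → ℝ) (a b κ : ℝ) : Prop :=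
  ∀ s t, 0 ≤ s → s ≤ t →
    bivariateLaplace P (H₁ t - H₁ s) (H₂ t - H₂ s) a b = exp (-(t - s) * κ)

/-- A pair of real processes on `[0, ∞)` started at `0` whose joint increment over `[s, t]` is
independent of the position at time `s`. Values at negative times are unconstrained. -/
structure IsIndepIncrementPair (P : Measure Ω) (H₁ H₂ : ℝ → Ω → ℝ) : Prop where
  aemeasurable_fst : ∀ t, 0 ≤ t → AEMeasurable (H₁ t) P
  aemeasurable_snd : ∀ t, 0 ≤ t → AEMeasurable (H₂ t) P
  ae_zero : ∀ᵐ ω ∂P, H₁ 0 ω = 0 ∧ H₂ 0 ω = 0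
  indepFun_sub : ∀ s t, 0 ≤ s → s ≤ t →
    IndepFun (fun ω => (H₁ t ω - H₁ s ω, H₂ t ω - H₂ s ω)) (fun ω => (H₁ s ω, H₂ s ω)) P

variable {H₁ H₂ : ℝ → Ω → ℝ} {α β κ σ s t : ℝ}

theorem HasIncrementExponent.bivariateLaplace_diag (hσ : HasIncrementExponent P H₁ H₂ α β σ)
    (hzero : ∀ᵐ ω ∂P, H₁ 0 ω = 0 ∧ H₂ 0 ω = 0) (hs : 0 ≤ s) :
    bivariateLaplace P (H₁ s) (H₂ s) α β = exp (-s * σ) := by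
  have increment_from_zero := hσ 0 s le_rfl hs
  rw [sub_zero] at increment_from_zero
  rw [← increment_from_zero]
  refine integral_congr_ae ?_
  filter_upwards [hzero] with ω hω
  simp only [Pi.sub_apply, hω.1, hω.2, sub_zero]

namespace IsIndepIncrementPair

theorem bivariateLaplace_of_fst_le_snd (h : IsIndepIncrementPair P H₁ H₂)
    (hσ : HasIncrementExponent P H₁ H₂ α β σ) (hκ : HasIncrementExponent P H₁ H₂ 0 β κ)
    (hs : 0 ≤ s) (hst : s ≤ t) :
    bivariateLaplace P (H₁ s) (H₂ t) α β = exp (-(t - s) * κ + -s * σ) := by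
  have ht := hs.trans hst
  rw [bivariateLaplace_snd_eq_mul_of_indepFun_sub (h.aemeasurable_fst s hs)
    (h.aemeasurable_snd s hs) (h.aemeasurable_fst t ht) (h.aemeasurable_snd t ht)
    (h.indepFun_sub s t hs hst), hκ s t hs hst, hσ.bivariateLaplace_diag h.ae_zero hs, exp_add]

theorem bivariateLaplace_of_snd_le_fst (h : IsIndepIncrementPair P H₁ H₂)
    (hσ : HasIncrementExponent P H₁ H₂ α β σ) (hκ : HasIncrementExponent P H₁ H₂ α 0 κ)
    (hs : 0 ≤ s) (hst : s ≤ t) :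
    bivariateLaplace P (H₁ t) (H₂ s) α β = exp (-(t - s) * κ + -s * σ) := by
  have ht := hs.trans hst
  rw [bivariateLaplace_fst_eq_mul_of_indepFun_sub (h.aemeasurable_fst s hs)
    (h.aemeasurable_snd s hs) (h.aemeasurable_fst t ht) (h.aemeasurable_snd t ht)
    (h.indepFun_sub s t hs hst), hκ s t hs hst, hσ.bivariateLaplace_diag h.ae_zero hs, exp_add]

end IsIndepIncrementPair

theorem biparameter_laplace_governing_equation_general {κ₁ κ₂ t₁ t₂ : ℝ}
    (h : IsIndepIncrementPair P H₁ H₂) (hσ : HasIncrementExponent P H₁ H₂ α β σ)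
    (hκ₁ : HasIncrementExponent P H₁ H₂ α 0 κ₁) (hκ₂ : HasIncrementExponent P H₁ H₂ 0 β κ₂)
    (ht₁ : 0 < t₁) (ht₂ : 0 < t₂) (hne : t₁ ≠ t₂) :
    ∃ d₁ d₂ : ℝ,
      HasDerivAt (fun s => bivariateLaplace P (H₁ s) (H₂ t₂) α β) d₁ t₁ ∧
      HasDerivAt (fun s => bivariateLaplace P (H₁ t₁) (H₂ s) α β) d₂ t₂ ∧
      d₁ + d₂ = -σ * bivariateLaplace P (H₁ t₁) (H₂ t₂) α β := by
  rcases hne.lt_or_gt with hlt | hgt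
  · exact ⟨_, _,
      hasDerivAt_of_eq_exp_lower_time ht₁ hlt fun u hu hut =>
        h.bivariateLaplace_of_fst_le_snd hσ hκ₂ hu.le hut.le,
      hasDerivAt_of_eq_exp_upper_time hlt fun v hv =>
        h.bivariateLaplace_of_fst_le_snd hσ hκ₂ ht₁.le hv.le,
      by ring⟩
  · exact ⟨_, _,
      hasDerivAt_of_eq_exp_upper_time hgt fun v hv =>
        h.bivariateLaplace_of_snd_le_fst hσ hκ₁ ht₂.le hv.le,
      hasDerivAt_of_eq_exp_lower_time ht₂ hgt fun u hu hut =>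
        h.bivariateLaplace_of_snd_le_fst hσ hκ₁ hu.le hut.le,
      by ring⟩

end Laplace

/-- For fixed `α, β ≥ 0`, the function
`F(t₁,t₂) = E[exp(−α H₁(t₁) − β H₂(t₂))]` has both partial derivatives at every
point with `t₁, t₂ > 0`, `t₁ ≠ t₂`, and their sum equals `−S(α,β)·F(t₁,t₂)`. -/
theorem biparameter_laplace_governing_equation
    {Ω : Type*} [MeasurableSpace Ω] (P : Measure Ω) [IsProbabilityMeasure P]
    (H1 H2 : ℝ → Ω → ℝ) (S : ℝ → ℝ → ℝ)
    (hH1meas : Measurable (Function.uncurry H1))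
    (hH2meas : Measurable (Function.uncurry H2))
    (hH1nonneg : ∀ x ω, 0 ≤ H1 x ω) (hH2nonneg : ∀ x ω, 0 ≤ H2 x ω)
    (hzero : ∀ᵐ ω ∂P, H1 0 ω = 0 ∧ H2 0 ω = 0)
    (hSnonneg : ∀ α β : ℝ, 0 ≤ α → 0 ≤ β → 0 ≤ S α β)
    (hindep : ∀ s t : ℝ, 0 ≤ s → s ≤ t →
      IndepFun (fun ω => (H1 t ω - H1 s ω, H2 t ω - H2 s ω))
        (fun ω => (H1 s ω, H2 s ω)) P)
    (hincr : ∀ s t α β : ℝ, 0 ≤ s → s ≤ t → 0 ≤ α → 0 ≤ β →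
      ∫ ω, Real.exp (-(α * (H1 t ω - H1 s ω)) - β * (H2 t ω - H2 s ω)) ∂P
        = Real.exp (-(t - s) * S α β))
    (α β : ℝ) (hα : 0 ≤ α) (hβ : 0 ≤ β)
    (F : ℝ → ℝ → ℝ)
    (hF : ∀ t1 t2 : ℝ, F t1 t2 = ∫ ω, Real.exp (-(α * H1 t1 ω) - β * H2 t2 ω) ∂P)
    (t1 t2 : ℝ) (ht1 : 0 < t1) (ht2 : 0 < t2) (hne : t1 ≠ t2) :
    ∃ d1 d2 : ℝ,
      HasDerivAt (fun s => F s t2) d1 t1 ∧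
      HasDerivAt (fun s => F t1 s) d2 t2 ∧
      d1 + d2 = -S α β * F t1 t2 := by
  have pair : IsIndepIncrementPair P H1 H2 :=
    ⟨fun _ _ => hH1meas.of_uncurry_left.aemeasurable,
      fun _ _ => hH2meas.of_uncurry_left.aemeasurable, hzero, hindep⟩
  have exponent {a b : ℝ} (ha : 0 ≤ a) (hb : 0 ≤ b) : HasIncrementExponent P H1 H2 a b (S a b) :=
    fun s t hs hst => hincr s t a b hs hst ha hb
  obtain rfl : F = fun t1 t2 => bivariateLaplace P (H1 t1) (H2 t2) α β := funext₂ hF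
  exact biparameter_laplace_governing_equation_general pair (exponent hα hβ)
    (exponent hα le_rfl) (exponent le_rfl hβ) ht1 ht2 hne
end

section
/- For all η₁, η₂ > 0, the double Laplace transform of the tail of the Lévy measure satisfies ∫₀^∞ ∫₀^∞ e^{−η₁t₁−η₂t₂} φ̄(t₁,t₂) dt₁ dt₂ = (T₁(η₁) + T₂(η₂) − S(η₁,η₂)) / (η₁ η₂). -/
open MeasureTheory

/-!
Since `(1 - e^{-η x}) / η = ∫₀ˣ e^{-η t} dt`, a layer cake formula in two variables turns the double
Laplace transform of the joint tail into the integral of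
`(1 - e^{-η₁ x₁}) (1 - e^{-η₂ x₂}) / (η₁ η₂)`, and
`(1 - u) (1 - v) = (1 - u) + (1 - v) - (1 - u v)` splits that integral into `T₁ + T₂ - S`.

The layer cake formula in two variables is the one-variable formula applied twice: first in `x₂` to
the measure restricted to `{t₁ < x₁}`, then in `x₁` to the measure weighted by the resulting
function of `x₂`.
-/

open Set

section LayerCake

variable {α : Type*} [MeasurableSpace α] {μ : Measure α} {X Y : α → ℝ} {g h : ℝ → ℝ}

theorem integral_integral_toReal {β : Type*} [MeasurableSpace β] {ν : Measure β}
    {F : α → β → ENNReal} (hF : ∀ a, AEMeasurable (F a) ν)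
    (hF_lintegral : AEMeasurable (fun a ↦ ∫⁻ b, F a b ∂ν) μ)
    (hF_ne_top : ∫⁻ a, ∫⁻ b, F a b ∂ν ∂μ ≠ ⊤) :
    ∫ a, ∫ b, (F a b).toReal ∂ν ∂μ = (∫⁻ a, ∫⁻ b, F a b ∂ν ∂μ).toReal := by
  have inner_lt_top : ∀ᵐ a ∂μ, ∫⁻ b, F a b ∂ν < ⊤ := ae_lt_top' hF_lintegral hF_ne_top
  rw [← integral_toReal hF_lintegral inner_lt_top]
  refine integral_congr_ae ?_
  filter_upwards [inner_lt_top] with a ha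
  exact integral_toReal (hF a) (ae_lt_top' (hF a) ha.ne)

theorem aemeasurable_intervalIntegral_comp (hX : AEMeasurable X μ) (hX_nonneg : 0 ≤ᵐ[μ] X)
    (g_intble : ∀ t > 0, IntervalIntegrable g volume 0 t)
    (g_nonneg : ∀ᵐ t ∂volume.restrict (Ioi 0), 0 ≤ g t) :
    AEMeasurable (fun a ↦ ∫ t in 0..X a, g t) μ := by
  have primitive_mono : Monotone fun x ↦ ∫ t in 0..max x 0, g t := by
    intro x y hxy
    rcases (le_max_right y 0).eq_or_lt with hy | hy
    · have hx : max x 0 = 0 :=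
        ((max_le_max_right 0 hxy).trans_eq hy.symm).antisymm (le_max_right x 0)
      simp only [hx, ← hy, le_refl]
    · exact intervalIntegral.integral_mono_interval le_rfl (le_max_right x 0)
        (max_le_max_right 0 hxy) (ae_restrict_of_ae_restrict_of_subset Ioc_subset_Ioi_self g_nonneg)
        (g_intble _ hy)
  refine (primitive_mono.measurable.comp_aemeasurable hX).congr ?_
  filter_upwards [hX_nonneg] with a ha
  simp only [Function.comp_apply, max_eq_left (show 0 ≤ X a from ha)]

theorem intervalIntegral_comp_nonneg (hX_nonneg : 0 ≤ᵐ[μ] X)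
    (g_nonneg : ∀ᵐ t ∂volume.restrict (Ioi 0), 0 ≤ g t) :
    ∀ᵐ a ∂μ, 0 ≤ ∫ t in 0..X a, g t := by
  filter_upwards [hX_nonneg] with a ha
  rw [intervalIntegral.integral_of_le (show 0 ≤ X a from ha)]
  exact setIntegral_nonneg_of_ae_restrict
    (ae_restrict_of_ae_restrict_of_subset Ioc_subset_Ioi_self g_nonneg)

theorem antitone_meas_lt_lt (μ : Measure α) (X Y : α → ℝ) (s : ℝ) :
    Antitone fun t ↦ μ {a | s < X a ∧ t < Y a} :=
  fun _ _ htt' ↦ measure_mono fun _ ha ↦ ⟨ha.1, htt'.trans_lt ha.2⟩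

theorem antitone_lintegral_mul_meas_lt_lt (μ : Measure α) (X Y : α → ℝ) (ν : Measure ℝ)
    (w : ℝ → ENNReal) :
    Antitone fun s ↦ ∫⁻ t, w t * μ {a | s < X a ∧ t < Y a} ∂ν := by
  intro s s' hss'
  refine lintegral_mono fun t ↦ mul_le_mul_right (measure_mono ?_) (w t)
  exact fun a ha ↦ ⟨hss'.trans_lt ha.1, ha.2⟩

theorem setLIntegral_comp_eq_lintegral_mul_meas_lt (A : Set α) (hY : AEMeasurable Y μ)
    (hY_nonneg : 0 ≤ᵐ[μ] Y) (h_intble : ∀ t > 0, IntervalIntegrable h volume 0 t)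
    (h_nonneg : ∀ᵐ t ∂volume.restrict (Ioi 0), 0 ≤ h t) :
    ∫⁻ a in A, ENNReal.ofReal (∫ t in 0..Y a, h t) ∂μ =
      ∫⁻ t in Ioi 0, ENNReal.ofReal (h t) * μ (A ∩ {a | t < Y a}) := by
  rw [lintegral_comp_eq_lintegral_meas_lt_mul _ (ae_restrict_of_ae hY_nonneg) hY.restrict
    h_intble h_nonneg]
  refine lintegral_congr fun t ↦ ?_
  rw [Measure.restrict_apply₀ (nullMeasurableSet_lt aemeasurable_const hY.restrict), inter_comm,
    mul_comm]

theorem lintegral_comp_mul_comp_eq_lintegral_lintegral_mul_meas_lt_lt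
    (hX : AEMeasurable X μ) (hX_nonneg : 0 ≤ᵐ[μ] X)
    (hY : AEMeasurable Y μ) (hY_nonneg : 0 ≤ᵐ[μ] Y)
    (g_intble : ∀ t > 0, IntervalIntegrable g volume 0 t)
    (g_nonneg : ∀ᵐ t ∂volume.restrict (Ioi 0), 0 ≤ g t)
    (h_intble : ∀ t > 0, IntervalIntegrable h volume 0 t)
    (h_nonneg : ∀ᵐ t ∂volume.restrict (Ioi 0), 0 ≤ h t) :
    ∫⁻ a, ENNReal.ofReal (∫ s in 0..X a, g s) * ENNReal.ofReal (∫ t in 0..Y a, h t) ∂μ =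
      ∫⁻ s in Ioi 0, ∫⁻ t in Ioi 0,
        ENNReal.ofReal (g s) * (ENNReal.ofReal (h t) * μ {a | s < X a ∧ t < Y a}) := by
  set H : α → ENNReal := fun a ↦ ENNReal.ofReal (∫ t in 0..Y a, h t)
  have hG_meas := (aemeasurable_intervalIntegral_comp hX hX_nonneg g_intble g_nonneg).ennreal_ofReal
  have hH_meas : AEMeasurable H μ :=
    (aemeasurable_intervalIntegral_comp hY hY_nonneg h_intble h_nonneg).ennreal_ofReal
  have weighted_ac : μ.withDensity H ≪ μ := withDensity_absolutelyContinuous μ H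
  calc ∫⁻ a, ENNReal.ofReal (∫ s in 0..X a, g s) * H a ∂μ
    _ = ∫⁻ a, ENNReal.ofReal (∫ s in 0..X a, g s) ∂μ.withDensity H := by
      rw [lintegral_withDensity_eq_lintegral_mul₀ hH_meas hG_meas]
      simp only [Pi.mul_apply, mul_comm]
    _ = ∫⁻ s in Ioi 0, μ.withDensity H {a | s < X a} * ENNReal.ofReal (g s) :=
      lintegral_comp_eq_lintegral_meas_lt_mul _ (weighted_ac.ae_le hX_nonneg)
        (hX.mono_ac weighted_ac) g_intble g_nonneg
    _ = _ := by
      refine lintegral_congr fun s ↦ ?_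
      rw [withDensity_apply₀ _ (nullMeasurableSet_lt aemeasurable_const hX),
        setLIntegral_comp_eq_lintegral_mul_meas_lt _ hY hY_nonneg h_intble h_nonneg, mul_comm,
        ← lintegral_const_mul' _ _ ENNReal.ofReal_ne_top]
      rfl

theorem integral_comp_mul_comp_eq_integral_integral_mul_meas_lt_lt
    (hX : AEMeasurable X μ) (hX_nonneg : 0 ≤ᵐ[μ] X)
    (hY : AEMeasurable Y μ) (hY_nonneg : 0 ≤ᵐ[μ] Y)
    (g_intble : ∀ t > 0, IntervalIntegrable g volume 0 t)
    (g_nonneg : ∀ᵐ t ∂volume.restrict (Ioi 0), 0 ≤ g t)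
    (h_intble : ∀ t > 0, IntervalIntegrable h volume 0 t)
    (h_nonneg : ∀ᵐ t ∂volume.restrict (Ioi 0), 0 ≤ h t)
    (hXY : Integrable (fun a ↦ (∫ s in 0..X a, g s) * ∫ t in 0..Y a, h t) μ) :
    ∫ a, (∫ s in 0..X a, g s) * (∫ t in 0..Y a, h t) ∂μ =
      ∫ s in Ioi 0, ∫ t in Ioi 0, g s * (h t * μ.real {a | s < X a ∧ t < Y a}) := by
  have hG_nonneg := intervalIntegral_comp_nonneg hX_nonneg g_nonneg
  have hH_nonneg := intervalIntegral_comp_nonneg hY_nonneg h_nonneg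
  have hGH_nonneg : 0 ≤ᵐ[μ] fun a ↦ (∫ s in 0..X a, g s) * ∫ t in 0..Y a, h t := by
    filter_upwards [hG_nonneg, hH_nonneg] with a using mul_nonneg
  set F : ℝ → ℝ → ENNReal := fun s t ↦
    ENNReal.ofReal (g s) * (ENNReal.ofReal (h t) * μ {a | s < X a ∧ t < Y a}) with hF_def
  have layer_cake : ∫⁻ a, ENNReal.ofReal ((∫ s in 0..X a, g s) * ∫ t in 0..Y a, h t) ∂μ =
      ∫⁻ s in Ioi 0, ∫⁻ t in Ioi 0, F s t := by
    rw [← lintegral_comp_mul_comp_eq_lintegral_lintegral_mul_meas_lt_lt hX hX_nonneg hY hY_nonneg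
      g_intble g_nonneg h_intble h_nonneg]
    refine lintegral_congr_ae ?_
    filter_upwards [hG_nonneg] with a ha using ENNReal.ofReal_mul ha
  have g_meas := aemeasurable_Ioi_of_forall_Ioc fun t ht ↦ (g_intble t ht).1.1.aemeasurable
  have h_meas := aemeasurable_Ioi_of_forall_Ioc fun t ht ↦ (h_intble t ht).1.1.aemeasurable
  have hF_meas (s : ℝ) : AEMeasurable (F s) (volume.restrict (Ioi 0)) :=
    (h_meas.ennreal_ofReal.mul (antitone_meas_lt_lt μ X Y s).measurable.aemeasurable).const_mul _
  have hF_lintegral_meas :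
      AEMeasurable (fun s ↦ ∫⁻ t in Ioi 0, F s t) (volume.restrict (Ioi 0)) := by
    simp only [hF_def, lintegral_const_mul' _ _ ENNReal.ofReal_ne_top]
    exact g_meas.ennreal_ofReal.mul
      (antitone_lintegral_mul_meas_lt_lt μ X Y _ _).measurable.aemeasurable
  rw [integral_eq_lintegral_of_nonneg_ae hGH_nonneg hXY.aestronglyMeasurable, layer_cake,
    ← integral_integral_toReal hF_meas hF_lintegral_meas (layer_cake ▸ hXY.lintegral_lt_top.ne)]
  refine integral_congr_ae ?_
  filter_upwards [g_nonneg] with s hs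
  refine integral_congr_ae ?_
  filter_upwards [h_nonneg] with t ht
  simp only [hF_def, ENNReal.toReal_mul, ENNReal.toReal_ofReal hs, ENNReal.toReal_ofReal ht,
    measureReal_def]

end LayerCake

theorem intervalIntegral_exp_neg_mul {η : ℝ} (hη : η ≠ 0) (x : ℝ) :
    ∫ t in 0..x, Real.exp (-(η * t)) = (1 - Real.exp (-(η * x))) / η := by
  simp only [← neg_mul]
  rw [intervalIntegral.integral_comp_mul_left Real.exp (neg_ne_zero.2 hη), integral_exp, mul_zero,
    Real.exp_zero, smul_eq_mul]
  field_simp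
  ring

theorem one_sub_exp_neg_mul_le_max_mul_min {η x : ℝ} (hx : 0 ≤ x) :
    1 - Real.exp (-(η * x)) ≤ max η 1 * min x 1 := by
  rcases le_total x 1 with h | h
  · calc 1 - Real.exp (-(η * x)) ≤ η * x := by linarith [Real.add_one_le_exp (-(η * x))]
      _ ≤ max η 1 * min x 1 := by
        rw [min_eq_left h]
        exact mul_le_mul_of_nonneg_right (le_max_left η 1) hx
  · calc 1 - Real.exp (-(η * x)) ≤ 1 := sub_le_self _ (Real.exp_pos _).le
      _ ≤ max η 1 * min x 1 := by
        rw [min_eq_right h, mul_one]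
        exact le_max_right η 1

theorem one_sub_exp_neg_mul_nonneg {η x : ℝ} (hη : 0 ≤ η) (hx : 0 ≤ x) :
    0 ≤ 1 - Real.exp (-(η * x)) :=
  sub_nonneg.2 (Real.exp_le_one_iff.2 (neg_nonpos.2 (mul_nonneg hη hx)))

section LaplaceExponent

variable {α : Type*} [MeasurableSpace α] {μ : Measure α} {X Y : α → ℝ} {η η₁ η₂ : ℝ}

theorem integrable_one_sub_exp_neg_mul (hX : AEMeasurable X μ) (hX_nonneg : 0 ≤ᵐ[μ] X)
    (hX_min : ∫⁻ a, ENNReal.ofReal (min (X a) 1) ∂μ < ⊤) (hη : 0 ≤ η) :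
    Integrable (fun a ↦ 1 - Real.exp (-(η * X a))) μ := by
  have min_integrable : Integrable (fun a ↦ min (X a) 1) μ := by
    refine ⟨(hX.min aemeasurable_const).aestronglyMeasurable, ?_⟩
    rwa [hasFiniteIntegral_iff_ofReal]
    filter_upwards [hX_nonneg] with a ha using le_min ha zero_le_one
  refine (min_integrable.const_mul (max η 1)).mono' (by fun_prop) ?_
  filter_upwards [hX_nonneg] with a ha
  rw [Real.norm_of_nonneg (one_sub_exp_neg_mul_nonneg hη ha)]
  exact one_sub_exp_neg_mul_le_max_mul_min ha

theorem integrable_one_sub_exp_neg_mul_mul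
    (hX : Integrable (fun a ↦ 1 - Real.exp (-(η₁ * X a))) μ)
    (hY : AEMeasurable Y μ) (hY_nonneg : 0 ≤ᵐ[μ] Y) (hη₂ : 0 ≤ η₂) :
    Integrable (fun a ↦ (1 - Real.exp (-(η₁ * X a))) * (1 - Real.exp (-(η₂ * Y a)))) μ := by
  refine hX.mul_bdd (c := 1) (by fun_prop) ?_
  filter_upwards [hY_nonneg] with a ha
  rw [Real.norm_of_nonneg (one_sub_exp_neg_mul_nonneg hη₂ ha)]
  exact sub_le_self _ (Real.exp_pos _).le

theorem integral_integral_exp_mul_meas_lt_lt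
    (hX : AEMeasurable X μ) (hX_nonneg : 0 ≤ᵐ[μ] X)
    (hY : AEMeasurable Y μ) (hY_nonneg : 0 ≤ᵐ[μ] Y) (hη₁ : η₁ ≠ 0) (hη₂ : η₂ ≠ 0)
    (hXY : Integrable
      (fun a ↦ (1 - Real.exp (-(η₁ * X a))) * (1 - Real.exp (-(η₂ * Y a)))) μ) :
    ∫ t₁ in Ioi 0, ∫ t₂ in Ioi 0,
        Real.exp (-(η₁ * t₁) - η₂ * t₂) * μ.real {a | t₁ < X a ∧ t₂ < Y a} =
      (∫ a, (1 - Real.exp (-(η₁ * X a))) * (1 - Real.exp (-(η₂ * Y a))) ∂μ) / (η₁ * η₂) := by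
  have exp_intble (η : ℝ) (t : ℝ) (_ : t > 0) :
      IntervalIntegrable (fun u ↦ Real.exp (-(η * u))) volume 0 t :=
    Continuous.intervalIntegrable (by fun_prop) _ _
  have exp_nonneg (η : ℝ) : ∀ᵐ t ∂volume.restrict (Ioi 0), 0 ≤ Real.exp (-(η * t)) :=
    ae_of_all _ fun _ ↦ (Real.exp_pos _).le
  have layer_cake := integral_comp_mul_comp_eq_integral_integral_mul_meas_lt_lt hX hX_nonneg
    hY hY_nonneg (exp_intble η₁) (exp_nonneg η₁) (exp_intble η₂) (exp_nonneg η₂)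
  simp only [intervalIntegral_exp_neg_mul hη₁, intervalIntegral_exp_neg_mul hη₂,
    div_mul_div_comm, integral_div, ← mul_assoc, ← Real.exp_add, ← sub_eq_add_neg] at layer_cake
  exact (layer_cake (hXY.div_const _)).symm

theorem integral_one_sub_mul_one_sub {u v : α → ℝ}
    (hu : Integrable (fun a ↦ 1 - u a) μ) (hv : Integrable (fun a ↦ 1 - v a) μ)
    (huv : Integrable (fun a ↦ (1 - u a) * (1 - v a)) μ) :
    ∫ a, (1 - u a) * (1 - v a) ∂μ =
      ∫ a, (1 - u a) ∂μ + ∫ a, (1 - v a) ∂μ - ∫ a, (1 - u a * v a) ∂μ := by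
  have inclusion_exclusion (a : α) :
      1 - u a * v a = (1 - u a) + (1 - v a) - (1 - u a) * (1 - v a) := by ring
  simp only [inclusion_exclusion]
  rw [integral_sub (hu.fun_add hv) huv, integral_add hu hv, sub_sub_cancel]

theorem laplace_transform_tail_levy_measure_general
    (hX : AEMeasurable X μ) (hX_nonneg : 0 ≤ᵐ[μ] X)
    (hX_min : ∫⁻ a, ENNReal.ofReal (min (X a) 1) ∂μ < ⊤)
    (hY : AEMeasurable Y μ) (hY_nonneg : 0 ≤ᵐ[μ] Y)
    (hY_min : ∫⁻ a, ENNReal.ofReal (min (Y a) 1) ∂μ < ⊤) (hη₁ : 0 < η₁) (hη₂ : 0 < η₂) :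
    ∫ t₁ in Ioi 0, ∫ t₂ in Ioi 0,
        Real.exp (-(η₁ * t₁) - η₂ * t₂) * μ.real {a | t₁ < X a ∧ t₂ < Y a} =
      (∫ a, (1 - Real.exp (-(η₁ * X a))) ∂μ + ∫ a, (1 - Real.exp (-(η₂ * Y a))) ∂μ -
        ∫ a, (1 - Real.exp (-(η₁ * X a) - η₂ * Y a)) ∂μ) / (η₁ * η₂) := by
  have hX_int := integrable_one_sub_exp_neg_mul hX hX_nonneg hX_min hη₁.le
  have hY_int := integrable_one_sub_exp_neg_mul hY hY_nonneg hY_min hη₂.le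
  have hXY_int := integrable_one_sub_exp_neg_mul_mul hX_int hY hY_nonneg hη₂.le
  rw [integral_integral_exp_mul_meas_lt_lt hX hX_nonneg hY hY_nonneg hη₁.ne' hη₂.ne' hXY_int,
    integral_one_sub_mul_one_sub hX_int hY_int hXY_int]
  simp only [← Real.exp_add, ← sub_eq_add_neg]

end LaplaceExponent

/-- Double Laplace transform of the tail of the Lévy measure:
`∫₀^∞∫₀^∞ e^{−η₁t₁−η₂t₂} φ̄(t₁,t₂) dt₁dt₂ = (T₁(η₁)+T₂(η₂)−S(η₁,η₂))/(η₁η₂)`. -/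
theorem laplace_transform_tail_levy_measure
    (φ : Measure (ℝ × ℝ)) [SigmaFinite φ]
    (hsupp : φ {p : ℝ × ℝ | ¬ (0 ≤ p.1 ∧ 0 ≤ p.2)} = 0)
    (hint1 : ∫⁻ p, ENNReal.ofReal (min p.1 1) ∂φ < ⊤)
    (hint2 : ∫⁻ p, ENNReal.ofReal (min p.2 1) ∂φ < ⊤)
    (S : ℝ → ℝ → ℝ) (T1 T2 : ℝ → ℝ)
    (hS : ∀ η1 η2 : ℝ, 0 ≤ η1 → 0 ≤ η2 →
      S η1 η2 = ∫ p, (1 - Real.exp (-(η1 * p.1) - η2 * p.2)) ∂φ)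
    (hT1 : ∀ η : ℝ, 0 ≤ η → T1 η = ∫ p, (1 - Real.exp (-(η * p.1))) ∂φ)
    (hT2 : ∀ η : ℝ, 0 ≤ η → T2 η = ∫ p, (1 - Real.exp (-(η * p.2))) ∂φ)
    (η1 η2 : ℝ) (hη1 : 0 < η1) (hη2 : 0 < η2) :
    ∫ t1 in Set.Ioi (0 : ℝ), ∫ t2 in Set.Ioi (0 : ℝ),
        Real.exp (-(η1 * t1) - η2 * t2) * (φ (Set.Ioi t1 ×ˢ Set.Ioi t2)).toReal
      = (T1 η1 + T2 η2 - S η1 η2) / (η1 * η2) := by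
  have hsupp_ae : ∀ᵐ p ∂φ, 0 ≤ p.1 ∧ 0 ≤ p.2 := hsupp
  rw [hS _ _ hη1.le hη2.le, hT1 _ hη1.le, hT2 _ hη2.le]
  exact laplace_transform_tail_levy_measure_general
    measurable_fst.aemeasurable (hsupp_ae.mono fun _ hp ↦ hp.1) hint1
    measurable_snd.aemeasurable (hsupp_ae.mono fun _ hp ↦ hp.2) hint2 hη1 hη2
end

section
/- For all t₁, t₂ ≥ 0, all η₁, η₂ ≥ 0, and all 0 ≤ x₁ ≤ x₂: P(L₁(t₁) ≥ x₁, L₂(t₂) ≥ x₂) ≤ exp(−x₁ S(η₁,η₂)) · exp(−(x₂−x₁) T₂(η₂)) · exp(η₁ t₁ + η₂ t₂); symmetrically, for 0 ≤ x₂ < x₁: P(L₁(t₁) ≥ x₁, L₂(t₂) ≥ x₂) ≤ exp(−x₂ S(η₁,η₂)) · exp(−(x₁−x₂) T₁(η₁)) · exp(η₁ t₁ + η₂ t₂). -/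
open MeasureTheory ProbabilityTheory

/-!
A path whose first passage above `t` happens no earlier than `x` satisfies `H (c * x) ≤ t` for every
`c < 1`, so the survival event lies in `{H₁ (c * x₁) ≤ t₁, H₂ (c * x₂) ≤ t₂}`. The Chernoff bound
controls the probability of the latter by a joint Laplace transform at two different times, which
factorises by splitting off the increment of `H₂` after the earlier time. Letting `c` tend to `1`
gives the bound.
-/

/-- The first time in `[0, ∞)` at which the path `h` exceeds the level `t`, i.e. the inverse of `h`.
It takes values in `EReal` so that it is `⊤` when `h` never exceeds `t`. -/
noncomputable def firstPassageTime (h : ℝ → ℝ) (t : ℝ) : EReal :=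
  ⨅ (x : ℝ) (_ : 0 ≤ x ∧ t < h x), (x : EReal)

section FirstPassageTime

variable {h : ℝ → ℝ} {t x : ℝ}

theorem coe_le_firstPassageTime_iff :
    (x : EReal) ≤ firstPassageTime h t ↔ ∀ y, 0 ≤ y → t < h y → x ≤ y := by
  simp only [firstPassageTime, le_iInf_iff, EReal.coe_le_coe_iff, and_imp]

theorem coe_le_firstPassageTime_of_le_sInf (hx : x ≤ sInf {y | 0 ≤ y ∧ h y > t}) :
    (x : EReal) ≤ firstPassageTime h t :=
  coe_le_firstPassageTime_iff.2 fun _ hy hty ↦ hx.trans <| csInf_le ⟨0, fun _ hz ↦ hz.1⟩ ⟨hy, hty⟩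

theorem apply_mul_le_of_coe_le_firstPassageTime {c : ℝ} (h0 : h 0 ≤ t) (hx : 0 ≤ x) (hc0 : 0 ≤ c)
    (hc1 : c < 1) (hxt : (x : EReal) ≤ firstPassageTime h t) : h (c * x) ≤ t := by
  rcases hx.eq_or_lt with rfl | hx_pos
  · rwa [mul_zero]
  · by_contra! hlt
    have hle : x ≤ c * x := coe_le_firstPassageTime_iff.1 hxt _ (mul_nonneg hc0 hx) hlt
    exact hle.not_gt (mul_lt_of_lt_one_left hx_pos hc1)

end FirstPassageTime

theorem exp_neg_sub_eq_mul_exp_increment {Ω : Type*} (X X' Y Y' : Ω → ℝ) (α β : ℝ) :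
    (fun ω ↦ Real.exp (-(α * X ω) - β * Y' ω)) =
      (fun ω ↦ Real.exp (-(α * X ω) - β * Y ω)) *
        fun ω ↦ Real.exp (-(0 * (X' ω - X ω)) - β * (Y' ω - Y ω)) := by
  ext ω
  rw [Pi.mul_apply, ← Real.exp_add]
  ring_nf

/-- `(H₁, H₂)` starts at the origin, and its increments are independent of the present value and
stationary with bivariate Laplace exponent `S`. This is the law of a bivariate subordinator; it says
nothing about sample paths. -/
structure IsBivariateSubordinatorInLaw {Ω : Type*} [MeasurableSpace Ω] (P : Measure Ω)
    (H₁ H₂ : ℝ → Ω → ℝ) (S : ℝ → ℝ → ℝ) : Prop where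
  zero : ∀ᵐ ω ∂P, H₁ 0 ω = 0 ∧ H₂ 0 ω = 0
  indepFun_increment : ∀ s t : ℝ, 0 ≤ s → s ≤ t →
    IndepFun (fun ω ↦ (H₁ t ω - H₁ s ω, H₂ t ω - H₂ s ω)) (fun ω ↦ (H₁ s ω, H₂ s ω)) P
  laplace_increment : ∀ s t α β : ℝ, 0 ≤ s → s ≤ t → 0 ≤ α → 0 ≤ β →
    ∫ ω, Real.exp (-(α * (H₁ t ω - H₁ s ω)) - β * (H₂ t ω - H₂ s ω)) ∂P
      = Real.exp (-(t - s) * S α β)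

namespace IsBivariateSubordinatorInLaw

variable {Ω : Type*} [MeasurableSpace Ω] {P : Measure Ω} {H₁ H₂ : ℝ → Ω → ℝ} {S : ℝ → ℝ → ℝ}

theorem swap (hH : IsBivariateSubordinatorInLaw P H₁ H₂ S) :
    IsBivariateSubordinatorInLaw P H₂ H₁ (Function.swap S) where
  zero := hH.zero.mono fun _ ↦ And.symm
  indepFun_increment s t hs hst :=
    (hH.indepFun_increment s t hs hst).comp measurable_swap measurable_swap
  laplace_increment s t α β hs hst hα hβ := by
    simpa only [neg_sub_comm] using hH.laplace_increment s t β α hs hst hβ hα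

variable {s t α β : ℝ}

theorem integrable_exp_increment (hH : IsBivariateSubordinatorInLaw P H₁ H₂ S) (hs : 0 ≤ s)
    (hst : s ≤ t) (hα : 0 ≤ α) (hβ : 0 ≤ β) :
    Integrable
      (fun ω ↦ Real.exp (-(α * (H₁ t ω - H₁ s ω)) - β * (H₂ t ω - H₂ s ω))) P :=
  .of_integral_ne_zero <| hH.laplace_increment s t α β hs hst hα hβ ▸ Real.exp_ne_zero _

theorem exp_increment_zero_ae_eq (hH : IsBivariateSubordinatorInLaw P H₁ H₂ S) :
    (fun ω ↦ Real.exp (-(α * (H₁ t ω - H₁ 0 ω)) - β * (H₂ t ω - H₂ 0 ω))) =ᵐ[P]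
      fun ω ↦ Real.exp (-(α * H₁ t ω) - β * H₂ t ω) := by
  filter_upwards [hH.zero] with ω ⟨h₁, h₂⟩
  rw [h₁, h₂, sub_zero, sub_zero]

theorem integrable_exp (hH : IsBivariateSubordinatorInLaw P H₁ H₂ S) (ht : 0 ≤ t) (hα : 0 ≤ α)
    (hβ : 0 ≤ β) : Integrable (fun ω ↦ Real.exp (-(α * H₁ t ω) - β * H₂ t ω)) P :=
  (hH.integrable_exp_increment le_rfl ht hα hβ).congr hH.exp_increment_zero_ae_eq

theorem integral_exp (hH : IsBivariateSubordinatorInLaw P H₁ H₂ S) (ht : 0 ≤ t) (hα : 0 ≤ α)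
    (hβ : 0 ≤ β) :
    ∫ ω, Real.exp (-(α * H₁ t ω) - β * H₂ t ω) ∂P = Real.exp (-t * S α β) := by
  rw [← integral_congr_ae hH.exp_increment_zero_ae_eq,
    hH.laplace_increment 0 t α β le_rfl ht hα hβ, sub_zero]

theorem indepFun_exp (hH : IsBivariateSubordinatorInLaw P H₁ H₂ S) (hs : 0 ≤ s) (hst : s ≤ t) :
    IndepFun (fun ω ↦ Real.exp (-(α * H₁ s ω) - β * H₂ s ω))
      (fun ω ↦ Real.exp (-(0 * (H₁ t ω - H₁ s ω)) - β * (H₂ t ω - H₂ s ω))) P :=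
  (hH.indepFun_increment s t hs hst).symm.comp
    (φ := fun p : ℝ × ℝ ↦ Real.exp (-(α * p.1) - β * p.2))
    (ψ := fun p : ℝ × ℝ ↦ Real.exp (-(0 * p.1) - β * p.2)) (by fun_prop) (by fun_prop)

theorem integrable_exp_of_le (hH : IsBivariateSubordinatorInLaw P H₁ H₂ S) (hs : 0 ≤ s)
    (hst : s ≤ t) (hα : 0 ≤ α) (hβ : 0 ≤ β) :
    Integrable (fun ω ↦ Real.exp (-(α * H₁ s ω) - β * H₂ t ω)) P := by
  rw [exp_neg_sub_eq_mul_exp_increment (H₁ s) (H₁ t) (H₂ s)]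
  exact (hH.indepFun_exp hs hst).integrable_mul (hH.integrable_exp hs hα hβ)
    (hH.integrable_exp_increment hs hst le_rfl hβ)

theorem integral_exp_of_le (hH : IsBivariateSubordinatorInLaw P H₁ H₂ S) (hs : 0 ≤ s)
    (hst : s ≤ t) (hα : 0 ≤ α) (hβ : 0 ≤ β) :
    ∫ ω, Real.exp (-(α * H₁ s ω) - β * H₂ t ω) ∂P =
      Real.exp (-s * S α β) * Real.exp (-(t - s) * S 0 β) := by
  rw [exp_neg_sub_eq_mul_exp_increment (H₁ s) (H₁ t) (H₂ s), ← hH.integral_exp hs hα hβ,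
    ← hH.laplace_increment s t 0 β hs hst le_rfl hβ]
  exact (hH.indepFun_exp hs hst).integral_mul_eq_mul_integral
    (hH.integrable_exp hs hα hβ).aestronglyMeasurable
    (hH.integrable_exp_increment hs hst le_rfl hβ).aestronglyMeasurable

variable [IsFiniteMeasure P] {t₁ t₂ η₁ η₂ x₁ x₂ : ℝ}

theorem measureReal_le_and_le_le (hH : IsBivariateSubordinatorInLaw P H₁ H₂ S) (hη₁ : 0 ≤ η₁)
    (hη₂ : 0 ≤ η₂) (hs : 0 ≤ s) (hst : s ≤ t) :
    P.real {ω | H₁ s ω ≤ t₁ ∧ H₂ t ω ≤ t₂} ≤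
      Real.exp (-s * S η₁ η₂) * Real.exp (-(t - s) * S 0 η₂) * Real.exp (η₁ * t₁ + η₂ * t₂) := by
  let X : Ω → ℝ := fun ω ↦ η₁ * H₁ s ω + η₂ * H₂ t ω
  have exp_neg_X : (fun ω ↦ Real.exp (-1 * X ω)) =
      fun ω ↦ Real.exp (-(η₁ * H₁ s ω) - η₂ * H₂ t ω) := by
    ext ω
    simp only [X]
    ring_nf
  calc P.real {ω | H₁ s ω ≤ t₁ ∧ H₂ t ω ≤ t₂}
      ≤ P.real {ω | X ω ≤ η₁ * t₁ + η₂ * t₂} := measureReal_mono fun ω ⟨h₁, h₂⟩ ↦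
        add_le_add (mul_le_mul_of_nonneg_left h₁ hη₁) (mul_le_mul_of_nonneg_left h₂ hη₂)
    _ ≤ Real.exp (-(-1) * (η₁ * t₁ + η₂ * t₂)) * mgf X P (-1) :=
        measure_le_le_exp_mul_mgf _ (by norm_num)
          (exp_neg_X ▸ hH.integrable_exp_of_le hs hst hη₁ hη₂)
    _ = _ := by
        rw [mgf, exp_neg_X, hH.integral_exp_of_le hs hst hη₁ hη₂, neg_neg, one_mul, mul_comm]

theorem measureReal_le_firstPassageTime_le (hH : IsBivariateSubordinatorInLaw P H₁ H₂ S)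
    (ht₁ : 0 ≤ t₁) (ht₂ : 0 ≤ t₂) (hη₁ : 0 ≤ η₁) (hη₂ : 0 ≤ η₂) (hx₁ : 0 ≤ x₁)
    (hx : x₁ ≤ x₂) :
    P.real {ω | x₁ ≤ firstPassageTime (H₁ · ω) t₁ ∧ x₂ ≤ firstPassageTime (H₂ · ω) t₂} ≤
      Real.exp (-x₁ * S η₁ η₂) * Real.exp (-(x₂ - x₁) * S 0 η₂) *
        Real.exp (η₁ * t₁ + η₂ * t₂) := by
  let bound : ℝ → ℝ := fun c ↦ Real.exp (-(c * x₁) * S η₁ η₂) *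
    Real.exp (-(c * x₂ - c * x₁) * S 0 η₂) * Real.exp (η₁ * t₁ + η₂ * t₂)
  have tendsto_bound : Filter.Tendsto bound (nhdsWithin 1 (Set.Iio 1)) (nhds (bound 1)) :=
    (show Continuous bound by fun_prop).continuousWithinAt
  suffices h : ∀ c ∈ Set.Ioo (0 : ℝ) 1, P.real {ω | x₁ ≤ firstPassageTime (H₁ · ω) t₁ ∧
      x₂ ≤ firstPassageTime (H₂ · ω) t₂} ≤ bound c by
    simpa only [bound, one_mul] using
      ge_of_tendsto tendsto_bound (Filter.mem_of_superset (Ioo_mem_nhdsLT one_pos) h)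
  rintro c ⟨hc0, hc1⟩
  refine (ENNReal.toReal_mono (measure_ne_top _ _) (measure_mono_ae ?_)).trans
    (hH.measureReal_le_and_le_le hη₁ hη₂ (mul_nonneg hc0.le hx₁)
      (mul_le_mul_of_nonneg_left hx hc0.le))
  filter_upwards [hH.zero] with ω ⟨h₁, h₂⟩ ⟨hL₁, hL₂⟩
  exact ⟨apply_mul_le_of_coe_le_firstPassageTime (h₁.trans_le ht₁) hx₁ hc0.le hc1 hL₁,
    apply_mul_le_of_coe_le_firstPassageTime (h₂.trans_le ht₂) (hx₁.trans hx) hc0.le hc1 hL₂⟩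

end IsBivariateSubordinatorInLaw

theorem inverse_bivariate_subordinator_survival_bound_general
    {Ω : Type*} [MeasurableSpace Ω] {P : Measure Ω} [IsFiniteMeasure P]
    {H₁ H₂ : ℝ → Ω → ℝ} {S : ℝ → ℝ → ℝ} (hH : IsBivariateSubordinatorInLaw P H₁ H₂ S)
    {t₁ t₂ η₁ η₂ : ℝ} (ht₁ : 0 ≤ t₁) (ht₂ : 0 ≤ t₂) (hη₁ : 0 ≤ η₁) (hη₂ : 0 ≤ η₂) (x₁ x₂ : ℝ) :
    (0 ≤ x₁ → x₁ ≤ x₂ →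
      P.real {ω | x₁ ≤ firstPassageTime (H₁ · ω) t₁ ∧ x₂ ≤ firstPassageTime (H₂ · ω) t₂} ≤
        Real.exp (-x₁ * S η₁ η₂) * Real.exp (-(x₂ - x₁) * S 0 η₂) *
          Real.exp (η₁ * t₁ + η₂ * t₂)) ∧
    (0 ≤ x₂ → x₂ ≤ x₁ →
      P.real {ω | x₁ ≤ firstPassageTime (H₁ · ω) t₁ ∧ x₂ ≤ firstPassageTime (H₂ · ω) t₂} ≤
        Real.exp (-x₂ * S η₁ η₂) * Real.exp (-(x₁ - x₂) * S η₁ 0) *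
          Real.exp (η₁ * t₁ + η₂ * t₂)) := by
  refine ⟨hH.measureReal_le_firstPassageTime_le ht₁ ht₂ hη₁ hη₂, fun hx₂ hx ↦ ?_⟩
  simpa only [and_comm, add_comm, Function.swap] using
    hH.swap.measureReal_le_firstPassageTime_le ht₂ ht₁ hη₂ hη₁ hx₂ hx

/-- Exponential bound for the joint survival function of the
inverse of a bivariate subordinator, with `T₁(α) = S(α,0)`, `T₂(β) = S(0,β)`. -/
theorem inverse_bivariate_subordinator_survival_bound
    {Ω : Type*} [MeasurableSpace Ω] (P : Measure Ω) [IsProbabilityMeasure P]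
    (H1 H2 : ℝ → Ω → ℝ) (S : ℝ → ℝ → ℝ)
    (hH1meas : Measurable (Function.uncurry H1))
    (hH2meas : Measurable (Function.uncurry H2))
    (hH1nonneg : ∀ x ω, 0 ≤ H1 x ω) (hH2nonneg : ∀ x ω, 0 ≤ H2 x ω)
    (hzero : ∀ᵐ ω ∂P, H1 0 ω = 0 ∧ H2 0 ω = 0)
    (hSnonneg : ∀ α β : ℝ, 0 ≤ α → 0 ≤ β → 0 ≤ S α β)
    (hindep : ∀ s t : ℝ, 0 ≤ s → s ≤ t →
      IndepFun (fun ω => (H1 t ω - H1 s ω, H2 t ω - H2 s ω))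
        (fun ω => (H1 s ω, H2 s ω)) P)
    (hincr : ∀ s t α β : ℝ, 0 ≤ s → s ≤ t → 0 ≤ α → 0 ≤ β →
      ∫ ω, Real.exp (-(α * (H1 t ω - H1 s ω)) - β * (H2 t ω - H2 s ω)) ∂P
        = Real.exp (-(t - s) * S α β))
    (hpath : ∀ᵐ ω ∂P,
      (∀ x y : ℝ, 0 ≤ x → x ≤ y → H1 x ω ≤ H1 y ω) ∧
      (∀ M : ℝ, ∃ x : ℝ, 0 ≤ x ∧ H1 x ω > M) ∧
      (∀ x y : ℝ, 0 ≤ x → x ≤ y → H2 x ω ≤ H2 y ω) ∧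
      (∀ M : ℝ, ∃ x : ℝ, 0 ≤ x ∧ H2 x ω > M))
    (L1 L2 : ℝ → Ω → ℝ)
    (hL1 : ∀ t ω, L1 t ω = sInf {x : ℝ | 0 ≤ x ∧ H1 x ω > t})
    (hL2 : ∀ t ω, L2 t ω = sInf {x : ℝ | 0 ≤ x ∧ H2 x ω > t})
    (t1 t2 η1 η2 : ℝ) (ht1 : 0 ≤ t1) (ht2 : 0 ≤ t2) (hη1 : 0 ≤ η1) (hη2 : 0 ≤ η2)
    (x1 x2 : ℝ) :
    (0 ≤ x1 → x1 ≤ x2 →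
      (P {ω | L1 t1 ω ≥ x1 ∧ L2 t2 ω ≥ x2}).toReal ≤
        Real.exp (-x1 * S η1 η2) * Real.exp (-(x2 - x1) * S 0 η2) *
          Real.exp (η1 * t1 + η2 * t2)) ∧
    (0 ≤ x2 → x2 < x1 →
      (P {ω | L1 t1 ω ≥ x1 ∧ L2 t2 ω ≥ x2}).toReal ≤
        Real.exp (-x2 * S η1 η2) * Real.exp (-(x1 - x2) * S η1 0) *
          Real.exp (η1 * t1 + η2 * t2)) := by
  have event_subset : {ω | L1 t1 ω ≥ x1 ∧ L2 t2 ω ≥ x2} ⊆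
      {ω | x1 ≤ firstPassageTime (H1 · ω) t1 ∧ x2 ≤ firstPassageTime (H2 · ω) t2} :=
    fun ω ⟨hω1, hω2⟩ ↦ ⟨coe_le_firstPassageTime_of_le_sInf (hL1 t1 ω ▸ hω1),
      coe_le_firstPassageTime_of_le_sInf (hL2 t2 ω ▸ hω2)⟩
  have bound := inverse_bivariate_subordinator_survival_bound_general ⟨hzero, hindep, hincr⟩
    ht1 ht2 hη1 hη2 x1 x2
  exact ⟨fun h0 h ↦ (measureReal_mono event_subset).trans (bound.1 h0 h),
    fun h0 h ↦ (measureReal_mono event_subset).trans (bound.2 h0 h.le)⟩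
end

section
/- For all η₁, η₂ > 0 such that T₁(η₁) > 0, T₂(η₂) > 0 and S(η₁,η₂) > 0, the double Laplace transform of the mixed moment satisfies ∫₀^∞ ∫₀^∞ e^{−η₁t₁−η₂t₂} E[L₁(t₁) L₂(t₂)] dt₁ dt₂ = (T₁(η₁) + T₂(η₂)) / (η₁ η₂ T₁(η₁) T₂(η₂) S(η₁,η₂)). -/
open MeasureTheory ProbabilityTheory

/-!
For a path `H` that is nondecreasing and unbounded on `[0, ∞)`, the inverse `L t` is the Lebesgue
measure of `{x > 0 | H x ≤ t}`. Hence `E[L₁ t₁ * L₂ t₂]` is the measure, under `P ⊗ dx ⊗ dy`, of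
`{(ω, x, y) | H₁ x ω ≤ t₁ ∧ H₂ y ω ≤ t₂}`, and Tonelli in `t₁` and `t₂` turns its double Laplace
transform into `(η₁ η₂)⁻¹ ∫∫ E[exp (-η₁ H₁ x - η₂ H₂ y)] dx dy`. On the triangle `x < y`,
independence of the increment over `[x, y]` gives
`E[exp (-η₁ H₁ x - η₂ H₂ y)] = exp (-x S(η₁, η₂) - (y - x) S(0, η₂))`, which integrates to
`1 / (S(η₁, η₂) S(0, η₂))`; the triangle `y < x` is symmetric.
-/

open Set
open scoped ENNReal

/-- The kernel `exp (-a t)` of the Laplace transform, with values in `ℝ≥0∞` so that Tonelli's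
theorem applies without integrability conditions. -/
noncomputable def laplaceKernel (a t : ℝ) : ℝ≥0∞ :=
  ENNReal.ofReal (Real.exp (-(a * t)))

@[fun_prop]
lemma measurable_laplaceKernel (a : ℝ) : Measurable (laplaceKernel a) := by
  unfold laplaceKernel
  fun_prop

lemma laplaceKernel_ne_top (a t : ℝ) : laplaceKernel a t ≠ ∞ := ENNReal.ofReal_ne_top

lemma laplaceKernel_zero_left (t : ℝ) : laplaceKernel 0 t = 1 := by
  simp [laplaceKernel]

lemma laplaceKernel_zero_right (a : ℝ) : laplaceKernel a 0 = 1 := by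
  simp [laplaceKernel]

lemma laplaceKernel_add (a s t : ℝ) :
    laplaceKernel a (s + t) = laplaceKernel a s * laplaceKernel a t := by
  rw [laplaceKernel, mul_add, neg_add, Real.exp_add, ENNReal.ofReal_mul (Real.exp_nonneg _)]
  rfl

lemma laplaceKernel_mul_laplaceKernel (a b s t : ℝ) :
    laplaceKernel a s * laplaceKernel b t = ENNReal.ofReal (Real.exp (-(a * s) - b * t)) := by
  rw [sub_eq_add_neg, Real.exp_add, ENNReal.ofReal_mul (Real.exp_nonneg _)]
  rfl

lemma lintegral_Ioi_laplaceKernel {a : ℝ} (ha : 0 < a) (c : ℝ) :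
    ∫⁻ t in Ioi c, laplaceKernel a t = ENNReal.ofReal a⁻¹ * laplaceKernel a c := by
  have hint : IntegrableOn (fun t ↦ Real.exp (-a * t)) (Ioi c) :=
    integrableOn_exp_mul_Ioi (neg_lt_zero.2 ha) c
  have hval : ∫ t in Ioi c, Real.exp (-a * t) = a⁻¹ * Real.exp (-a * c) := by
    rw [integral_exp_mul_Ioi (neg_lt_zero.2 ha), neg_div_neg_eq, div_eq_inv_mul]
  simp only [laplaceKernel, ← neg_mul]
  rw [← ofReal_integral_eq_lintegral_ofReal hint (ae_of_all _ fun _ ↦ Real.exp_nonneg _), hval,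
    ENNReal.ofReal_mul (inv_nonneg.2 ha.le)]

lemma lintegral_Ioi_indicator_Ici_laplaceKernel {a c : ℝ} (ha : 0 < a) (hc : 0 ≤ c) :
    ∫⁻ t in Ioi (0 : ℝ), (Ici c).indicator (laplaceKernel a) t =
      ENNReal.ofReal a⁻¹ * laplaceKernel a c := by
  have hset : (Ici c ∩ Ioi 0 : Set ℝ) =ᵐ[volume] Ioi c := by
    have hinter := Ioi_ae_eq_Ici (a := c) (μ := volume) |>.symm.inter (ae_eq_refl (Ioi 0))
    rwa [Ioi_inter_Ioi, sup_eq_left.2 hc] at hinter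
  rw [setLIntegral_indicator measurableSet_Ici, setLIntegral_congr hset,
    lintegral_Ioi_laplaceKernel ha]

lemma lintegral_Ioi_laplaceKernel_sub {a : ℝ} (ha : 0 < a) (c : ℝ) :
    ∫⁻ t in Ioi c, laplaceKernel a (t - c) = ENNReal.ofReal a⁻¹ := by
  simp only [sub_eq_add_neg, laplaceKernel_add]
  rw [lintegral_mul_const' _ _ (laplaceKernel_ne_top _ _), lintegral_Ioi_laplaceKernel ha,
    mul_assoc, ← laplaceKernel_add, add_neg_cancel, laplaceKernel_zero_right, mul_one]

lemma integral_integral_toReal_s8 {α β : Type*} [MeasurableSpace α] [MeasurableSpace β]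
    {μ : Measure α} {ν : Measure β} [SFinite ν] {F : α → β → ℝ≥0∞}
    (hF : Measurable (Function.uncurry F)) (hfin : ∫⁻ x, ∫⁻ y, F x y ∂ν ∂μ ≠ ∞) :
    ∫ x, ∫ y, (F x y).toReal ∂ν ∂μ = (∫⁻ x, ∫⁻ y, F x y ∂ν ∂μ).toReal := by
  have hinner : Measurable fun x ↦ ∫⁻ y, F x y ∂ν := hF.lintegral_prod_right
  have hinner_fin : ∀ᵐ x ∂μ, ∫⁻ y, F x y ∂ν < ∞ := ae_lt_top hinner hfin
  rw [← integral_toReal hinner.aemeasurable hinner_fin]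
  refine integral_congr_ae ?_
  filter_upwards [hinner_fin] with x hx
  have hFx : Measurable (F x) := hF.of_uncurry_left
  exact integral_toReal hFx.aemeasurable (ae_lt_top hFx hx.ne)

section SublevelSets

variable {Z : Type*} [MeasurableSpace Z] {μ : Measure Z} [SFinite μ] {f g : Z → ℝ}

lemma lintegral_laplaceKernel_mul_measure_sublevel {a : ℝ} (ha : 0 < a) (hf : Measurable f)
    (hf₀ : ∀ z, 0 ≤ f z) :
    ∫⁻ t in Ioi (0 : ℝ), laplaceKernel a t * μ {z | f z ≤ t} =
      ENNReal.ofReal a⁻¹ * ∫⁻ z, laplaceKernel a (f z) ∂μ := by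
  have hepi : MeasurableSet {p : ℝ × Z | f p.2 ≤ p.1} :=
    measurableSet_le (hf.comp measurable_snd) measurable_fst
  have hslice : ∀ z, ∫⁻ t in Ioi (0 : ℝ),
      {p : ℝ × Z | f p.2 ≤ p.1}.indicator (fun p ↦ laplaceKernel a p.1) (t, z) =
        ENNReal.ofReal a⁻¹ * laplaceKernel a (f z) := fun z ↦
    lintegral_Ioi_indicator_Ici_laplaceKernel ha (hf₀ z)
  calc ∫⁻ t in Ioi (0 : ℝ), laplaceKernel a t * μ {z | f z ≤ t}
      = ∫⁻ t in Ioi (0 : ℝ), ∫⁻ z,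
          {p : ℝ × Z | f p.2 ≤ p.1}.indicator (fun p ↦ laplaceKernel a p.1) (t, z) ∂μ := by
        refine lintegral_congr fun t ↦ ?_
        exact (lintegral_indicator_const (measurableSet_le hf measurable_const) _).symm
    _ = ∫⁻ z, (∫⁻ t in Ioi (0 : ℝ),
          {p : ℝ × Z | f p.2 ≤ p.1}.indicator (fun p ↦ laplaceKernel a p.1) (t, z)) ∂μ :=
        lintegral_lintegral_swap (Measurable.indicator (by fun_prop) hepi).aemeasurable
    _ = ENNReal.ofReal a⁻¹ * ∫⁻ z, laplaceKernel a (f z) ∂μ := by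
        simp only [hslice]
        exact lintegral_const_mul' _ _ ENNReal.ofReal_ne_top

lemma lintegral_laplaceKernel_mul_measure_inter_sublevel {a b : ℝ} (ha : 0 < a) (hb : 0 < b)
    (hf : Measurable f) (hg : Measurable g) (hf₀ : ∀ z, 0 ≤ f z) (hg₀ : ∀ z, 0 ≤ g z) :
    ∫⁻ s in Ioi (0 : ℝ), ∫⁻ t in Ioi (0 : ℝ),
        laplaceKernel a s * (laplaceKernel b t * μ {z | f z ≤ s ∧ g z ≤ t}) =
      ENNReal.ofReal a⁻¹ * (ENNReal.ofReal b⁻¹ *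
        ∫⁻ z, laplaceKernel a (f z) * laplaceKernel b (g z) ∂μ) := by
  have hKg : Measurable fun z ↦ laplaceKernel b (g z) := by fun_prop
  -- Absorbing the kernel in `g` into the measure lets the one-variable formula be applied twice.
  have hinner : ∀ s, ∫⁻ t in Ioi (0 : ℝ), laplaceKernel b t * μ {z | f z ≤ s ∧ g z ≤ t} =
      ENNReal.ofReal b⁻¹ * μ.withDensity (fun z ↦ laplaceKernel b (g z)) {z | f z ≤ s} := by
    intro s
    rw [withDensity_apply _ (measurableSet_le hf measurable_const),
      ← lintegral_laplaceKernel_mul_measure_sublevel hb hg hg₀]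
    refine lintegral_congr fun t ↦ ?_
    rw [Measure.restrict_apply (measurableSet_le hg measurable_const), inter_comm]
    rfl
  calc _ = ∫⁻ s in Ioi (0 : ℝ), ENNReal.ofReal b⁻¹ * (laplaceKernel a s *
          μ.withDensity (fun z ↦ laplaceKernel b (g z)) {z | f z ≤ s}) := by
        refine lintegral_congr fun s ↦ ?_
        rw [lintegral_const_mul' _ _ (laplaceKernel_ne_top _ _), hinner, mul_left_comm]
    _ = ENNReal.ofReal b⁻¹ * (ENNReal.ofReal a⁻¹ *
          ∫⁻ z, laplaceKernel a (f z) ∂μ.withDensity (fun z ↦ laplaceKernel b (g z))) := by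
        rw [lintegral_const_mul' _ _ ENNReal.ofReal_ne_top,
          lintegral_laplaceKernel_mul_measure_sublevel ha hf hf₀]
    _ = _ := by
        rw [lintegral_withDensity_eq_lintegral_mul _ hKg (by fun_prop), mul_left_comm]
        simp only [Pi.mul_apply, mul_comm]

lemma integral_exp_mul_measureReal_inter_sublevel {a b : ℝ} (ha : 0 < a) (hb : 0 < b)
    (hf : Measurable f) (hg : Measurable g) (hf₀ : ∀ z, 0 ≤ f z) (hg₀ : ∀ z, 0 ≤ g z)
    (hfin : ∫⁻ z, laplaceKernel a (f z) * laplaceKernel b (g z) ∂μ ≠ ∞) :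
    ∫ s in Ioi (0 : ℝ), ∫ t in Ioi (0 : ℝ),
        Real.exp (-(a * s) - b * t) * μ.real {z | f z ≤ s ∧ g z ≤ t} =
      a⁻¹ * (b⁻¹ * (∫⁻ z, laplaceKernel a (f z) * laplaceKernel b (g z) ∂μ).toReal) := by
  have hlintegral := lintegral_laplaceKernel_mul_measure_inter_sublevel (μ := μ) ha hb hf hg hf₀ hg₀
  have hsublevel : MeasurableSet {p : (ℝ × ℝ) × Z | f p.2 ≤ p.1.1 ∧ g p.2 ≤ p.1.2} :=
    (measurableSet_le (hf.comp measurable_snd) measurable_fst.fst).inter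
      (measurableSet_le (hg.comp measurable_snd) measurable_fst.snd)
  have hmeas : Measurable fun p : ℝ × ℝ ↦
      laplaceKernel a p.1 * (laplaceKernel b p.2 * μ {z | f z ≤ p.1 ∧ g z ≤ p.2}) := by
    have := measurable_measure_prodMk_left (ν := μ) hsublevel
    exact Measurable.mul (by fun_prop) (Measurable.mul (by fun_prop) this)
  have hintegrand : ∀ s t, Real.exp (-(a * s) - b * t) * μ.real {z | f z ≤ s ∧ g z ≤ t} =
      (laplaceKernel a s * (laplaceKernel b t * μ {z | f z ≤ s ∧ g z ≤ t})).toReal := by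
    intro s t
    rw [← mul_assoc, laplaceKernel_mul_laplaceKernel, ENNReal.toReal_mul,
      ENNReal.toReal_ofReal (Real.exp_nonneg _), measureReal_def]
  simp only [hintegrand]
  rw [integral_integral_toReal_s8 hmeas, hlintegral]
  · simp only [ENNReal.toReal_mul, ENNReal.toReal_ofReal (inv_nonneg.2 ha.le),
      ENNReal.toReal_ofReal (inv_nonneg.2 hb.le)]
  · rw [hlintegral]
    finiteness

end SublevelSets

section Triangle

variable {α : Type*} [LinearOrder α] [TopologicalSpace α] [OrderClosedTopology α]
  [SecondCountableTopology α] [MeasurableSpace α] [OpensMeasurableSpace α]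
  {μ ν : Measure α} [SFinite μ]

lemma lintegral_lintegral_Iio_swap [SFinite ν] {F : α → α → ℝ≥0∞}
    (hF : Measurable (Function.uncurry F)) :
    ∫⁻ x, ∫⁻ y in Iio x, F x y ∂ν ∂μ = ∫⁻ y, ∫⁻ x in Ioi y, F x y ∂μ ∂ν := by
  have hlower : MeasurableSet {p : α × α | p.2 < p.1} :=
    measurableSet_lt measurable_snd measurable_fst
  simp only [← lintegral_indicator measurableSet_Iio, ← lintegral_indicator measurableSet_Ioi]
  exact lintegral_lintegral_swap (hF.indicator hlower).aemeasurable

lemma lintegral_lintegral_eq_add_triangles [NullSingletonClass μ] {F : α → α → ℝ≥0∞}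
    (hF : Measurable (Function.uncurry F)) :
    ∫⁻ x, ∫⁻ y, F x y ∂μ ∂μ =
      (∫⁻ x, ∫⁻ y in Ioi x, F x y ∂μ ∂μ) + ∫⁻ y, ∫⁻ x in Ioi y, F x y ∂μ ∂μ := by
  have hupper : Measurable fun x ↦ ∫⁻ y in Ioi x, F x y ∂μ := by
    simp only [← lintegral_indicator measurableSet_Ioi]
    exact (hF.indicator (measurableSet_lt measurable_fst measurable_snd)).lintegral_prod_right'
  rw [← lintegral_lintegral_Iio_swap hF, ← lintegral_add_left hupper]
  refine lintegral_congr fun x ↦ ?_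
  rw [← lintegral_add_compl _ measurableSet_Ioi, compl_Ioi, setLIntegral_congr Iio_ae_eq_Iic]

end Triangle

/-- The right-continuous inverse `inf {x ≥ 0 : f x > t}` of a path `f` on `[0, ∞)`. It is `0`, not
`∞`, when `f` never exceeds `t`. -/
noncomputable def firstPassage (f : ℝ → ℝ) (t : ℝ) : ℝ := sInf {x | 0 ≤ x ∧ t < f x}

lemma firstPassage_nonneg (f : ℝ → ℝ) (t : ℝ) : 0 ≤ firstPassage f t :=
  Real.sInf_nonneg fun _ hx ↦ hx.1

lemma volume_sublevel_eq_firstPassage {f : ℝ → ℝ} {t : ℝ} (hf : MonotoneOn f (Ici 0))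
    (hft : ∃ x, 0 ≤ x ∧ t < f x) :
    volume.restrict (Ioi 0) {x | f x ≤ t} = ENNReal.ofReal (firstPassage f t) := by
  have hsub : {x | f x ≤ t} ∩ Ioi 0 ⊆ Ioc 0 (firstPassage f t) := by
    rintro x ⟨hxt, hx⟩
    refine ⟨hx, le_csInf hft fun y ⟨hy, hty⟩ ↦ ?_⟩
    exact (hf.reflect_lt (mem_Ici_of_Ioi hx) hy (hxt.trans_lt hty)).le
  have hsup : Ioo 0 (firstPassage f t) ⊆ {x | f x ≤ t} ∩ Ioi 0 := by
    rintro x ⟨hx, hxL⟩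
    exact ⟨not_lt.1 fun htx ↦ notMem_of_lt_csInf hxL ⟨0, fun _ hy ↦ hy.1⟩ ⟨hx.le, htx⟩, hx⟩
  rw [Measure.restrict_apply' measurableSet_Ioi]
  refine le_antisymm ((measure_mono hsub).trans_eq ?_) (Eq.trans_le ?_ (measure_mono hsup))
  · rw [Real.volume_Ioc, sub_zero]
  · rw [Real.volume_Ioo, sub_zero]

/-- The product of `P` with Lebesgue measure on the quadrant of pairs of positive times. -/
noncomputable abbrev prodQuadrant {Ω : Type*} [MeasurableSpace Ω] (P : Measure Ω) :
    Measure (Ω × ℝ × ℝ) :=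
  P.prod ((volume.restrict (Ioi 0)).prod (volume.restrict (Ioi 0)))

section MixedMoment

variable {Ω : Type*} [MeasurableSpace Ω] {P : Measure Ω} {H₁ H₂ : ℝ → Ω → ℝ}

lemma measurable_comp_time_fst {H : ℝ → Ω → ℝ} (hH : Measurable (Function.uncurry H)) :
    Measurable fun z : Ω × ℝ × ℝ ↦ H z.2.1 z.1 :=
  hH.comp (by fun_prop : Measurable fun z : Ω × ℝ × ℝ ↦ (z.2.1, z.1))

lemma measurable_comp_time_snd {H : ℝ → Ω → ℝ} (hH : Measurable (Function.uncurry H)) :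
    Measurable fun z : Ω × ℝ × ℝ ↦ H z.2.2 z.1 :=
  hH.comp (by fun_prop : Measurable fun z : Ω × ℝ × ℝ ↦ (z.2.2, z.1))

lemma integral_firstPassage_mul_firstPassage {s t : ℝ} (hH₁ : Measurable (Function.uncurry H₁))
    (hH₂ : Measurable (Function.uncurry H₂))
    (hpath₁ : ∀ᵐ ω ∂P, MonotoneOn (H₁ · ω) (Ici 0) ∧ ∃ x, 0 ≤ x ∧ s < H₁ x ω)
    (hpath₂ : ∀ᵐ ω ∂P, MonotoneOn (H₂ · ω) (Ici 0) ∧ ∃ x, 0 ≤ x ∧ t < H₂ x ω) :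
    ∫ ω, firstPassage (H₁ · ω) s * firstPassage (H₂ · ω) t ∂P =
      (prodQuadrant P).real {z | H₁ z.2.1 z.1 ≤ s ∧ H₂ z.2.2 z.1 ≤ t} := by
  have hsublevel : MeasurableSet {z : Ω × ℝ × ℝ | H₁ z.2.1 z.1 ≤ s ∧ H₂ z.2.2 z.1 ≤ t} :=
    (measurableSet_le (measurable_comp_time_fst hH₁) measurable_const).inter
      (measurableSet_le (measurable_comp_time_snd hH₂) measurable_const)
  have hslice : ∀ᵐ ω ∂P, (volume.restrict (Ioi 0)).prod (volume.restrict (Ioi 0))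
      (Prod.mk ω ⁻¹' {z | H₁ z.2.1 z.1 ≤ s ∧ H₂ z.2.2 z.1 ≤ t}) =
        ENNReal.ofReal (firstPassage (H₁ · ω) s) * ENNReal.ofReal (firstPassage (H₂ · ω) t) := by
    filter_upwards [hpath₁, hpath₂] with ω ⟨hmono₁, hlt₁⟩ ⟨hmono₂, hlt₂⟩
    rw [← volume_sublevel_eq_firstPassage hmono₁ hlt₁,
      ← volume_sublevel_eq_firstPassage hmono₂ hlt₂]
    exact Measure.prod_prod {x | H₁ x ω ≤ s} {y | H₂ y ω ≤ t}
  rw [measureReal_def, Measure.prod_apply hsublevel,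
    ← integral_toReal (measurable_measure_prodMk_left hsublevel).aemeasurable]
  · refine integral_congr_ae ?_
    filter_upwards [hslice] with ω hω
    rw [hω, ENNReal.toReal_mul, ENNReal.toReal_ofReal (firstPassage_nonneg _ _),
      ENNReal.toReal_ofReal (firstPassage_nonneg _ _)]
  · filter_upwards [hslice] with ω hω
    rw [hω]
    finiteness

end MixedMoment

/-- `(H₁, H₂)` is a pair of jointly measurable processes starting from `0` with jointly independent
and stationary increments, and joint Laplace exponent `S`. Independence is only required of
the increment from the state at the earlier time, and stationarity is encoded by the Laplace
transform of the increments. Monotonicity of the paths is not part of the notion. -/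
structure IsBivariateLevy {Ω : Type*} [MeasurableSpace Ω] (P : Measure Ω) (H₁ H₂ : ℝ → Ω → ℝ)
    (S : ℝ → ℝ → ℝ) : Prop where
  measurable_fst : Measurable (Function.uncurry H₁)
  measurable_snd : Measurable (Function.uncurry H₂)
  zero : ∀ᵐ ω ∂P, H₁ 0 ω = 0 ∧ H₂ 0 ω = 0
  indepFun_increment : ∀ s t : ℝ, 0 ≤ s → s ≤ t →
    IndepFun (fun ω ↦ (H₁ t ω - H₁ s ω, H₂ t ω - H₂ s ω)) (fun ω ↦ (H₁ s ω, H₂ s ω)) P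
  integral_exp_increment : ∀ s t α β : ℝ, 0 ≤ s → s ≤ t → 0 ≤ α → 0 ≤ β →
    ∫ ω, Real.exp (-(α * (H₁ t ω - H₁ s ω)) - β * (H₂ t ω - H₂ s ω)) ∂P =
      Real.exp (-(t - s) * S α β)

namespace IsBivariateLevy

variable {Ω : Type*} [MeasurableSpace Ω] {P : Measure Ω} {H₁ H₂ : ℝ → Ω → ℝ} {S : ℝ → ℝ → ℝ}
  {s t α β : ℝ}

lemma symm (h : IsBivariateLevy P H₁ H₂ S) : IsBivariateLevy P H₂ H₁ (fun β α ↦ S α β) where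
  measurable_fst := h.measurable_snd
  measurable_snd := h.measurable_fst
  zero := h.zero.mono fun _ ↦ And.symm
  indepFun_increment s t hs hst :=
    (h.indepFun_increment s t hs hst).comp measurable_swap measurable_swap
  integral_exp_increment s t β α hs hst hβ hα := by
    rw [← h.integral_exp_increment s t α β hs hst hα hβ]
    congr! 3
    ring

lemma lintegral_laplaceKernel_increment (h : IsBivariateLevy P H₁ H₂ S) (hs : 0 ≤ s) (hst : s ≤ t)
    (hα : 0 ≤ α) (hβ : 0 ≤ β) :
    ∫⁻ ω, laplaceKernel α (H₁ t ω - H₁ s ω) * laplaceKernel β (H₂ t ω - H₂ s ω) ∂P =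
      laplaceKernel (S α β) (t - s) := by
  have hval := h.integral_exp_increment s t α β hs hst hα hβ
  have hint := Integrable.of_integral_ne_zero (hval.trans_ne (Real.exp_ne_zero _))
  simp only [laplaceKernel_mul_laplaceKernel]
  rw [← ofReal_integral_eq_lintegral_ofReal hint (ae_of_all _ fun _ ↦ Real.exp_nonneg _), hval,
    laplaceKernel, neg_mul, mul_comm]

lemma lintegral_laplaceKernel_same_time (h : IsBivariateLevy P H₁ H₂ S) (hs : 0 ≤ s) (hα : 0 ≤ α)
    (hβ : 0 ≤ β) :
    ∫⁻ ω, laplaceKernel α (H₁ s ω) * laplaceKernel β (H₂ s ω) ∂P = laplaceKernel (S α β) s := by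
  have hincrement := h.lintegral_laplaceKernel_increment le_rfl hs hα hβ
  rw [sub_zero] at hincrement
  rw [← hincrement]
  refine lintegral_congr_ae ?_
  filter_upwards [h.zero] with ω ⟨h₁, h₂⟩
  rw [h₁, h₂, sub_zero, sub_zero]

lemma lintegral_laplaceKernel_of_le (h : IsBivariateLevy P H₁ H₂ S) (hs : 0 ≤ s) (hst : s ≤ t)
    (hα : 0 ≤ α) (hβ : 0 ≤ β) :
    ∫⁻ ω, laplaceKernel α (H₁ s ω) * laplaceKernel β (H₂ t ω) ∂P =
      laplaceKernel (S α β) s * laplaceKernel (S 0 β) (t - s) := by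
  have hH₁ : ∀ x, Measurable (H₁ x) := fun _ ↦ h.measurable_fst.of_uncurry_left
  have hH₂ : ∀ x, Measurable (H₂ x) := fun _ ↦ h.measurable_snd.of_uncurry_left
  have hpair : Measurable fun p : ℝ × ℝ ↦ laplaceKernel α p.1 * laplaceKernel β p.2 := by fun_prop
  have hsnd : Measurable fun p : ℝ × ℝ ↦ laplaceKernel β p.2 := by fun_prop
  have hindep : IndepFun (fun ω ↦ laplaceKernel α (H₁ s ω) * laplaceKernel β (H₂ s ω))
      (fun ω ↦ laplaceKernel β (H₂ t ω - H₂ s ω)) P :=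
    (h.indepFun_increment s t hs hst).symm.comp hpair hsnd
  have hincrement : ∫⁻ ω, laplaceKernel β (H₂ t ω - H₂ s ω) ∂P = laplaceKernel (S 0 β) (t - s) := by
    simpa only [laplaceKernel_zero_left, one_mul] using
      h.lintegral_laplaceKernel_increment hs hst le_rfl hβ
  calc ∫⁻ ω, laplaceKernel α (H₁ s ω) * laplaceKernel β (H₂ t ω) ∂P
      = ∫⁻ ω, laplaceKernel α (H₁ s ω) * laplaceKernel β (H₂ s ω) *
          laplaceKernel β (H₂ t ω - H₂ s ω) ∂P := by
        simp only [mul_assoc, ← laplaceKernel_add, add_sub_cancel]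
    _ = (∫⁻ ω, laplaceKernel α (H₁ s ω) * laplaceKernel β (H₂ s ω) ∂P) *
          ∫⁻ ω, laplaceKernel β (H₂ t ω - H₂ s ω) ∂P :=
        lintegral_mul_eq_lintegral_mul_lintegral_of_indepFun'' (by fun_prop) (by fun_prop) hindep
    _ = laplaceKernel (S α β) s * laplaceKernel (S 0 β) (t - s) := by
        rw [h.lintegral_laplaceKernel_same_time hs hα hβ, hincrement]

lemma lintegral_laplaceKernel_triangle (h : IsBivariateLevy P H₁ H₂ S) (hα : 0 ≤ α) (hβ : 0 ≤ β)
    (hS : 0 < S α β) (hT : 0 < S 0 β) :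
    ∫⁻ x in Ioi (0 : ℝ), ∫⁻ y in Ioi x, ∫⁻ ω,
        laplaceKernel α (H₁ x ω) * laplaceKernel β (H₂ y ω) ∂P =
      ENNReal.ofReal (S α β)⁻¹ * ENNReal.ofReal (S 0 β)⁻¹ := by
  have hinner : ∀ x ∈ Ioi (0 : ℝ),
      ∫⁻ y in Ioi x, ∫⁻ ω, laplaceKernel α (H₁ x ω) * laplaceKernel β (H₂ y ω) ∂P =
        laplaceKernel (S α β) x * ENNReal.ofReal (S 0 β)⁻¹ := by
    intro x hx
    rw [← lintegral_Ioi_laplaceKernel_sub hT x,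
      ← lintegral_const_mul' _ _ (laplaceKernel_ne_top _ _)]
    exact setLIntegral_congr_fun measurableSet_Ioi fun y hy ↦
      h.lintegral_laplaceKernel_of_le (le_of_lt hx) (le_of_lt hy) hα hβ
  rw [setLIntegral_congr_fun measurableSet_Ioi hinner,
    lintegral_mul_const' _ _ ENNReal.ofReal_ne_top, lintegral_Ioi_laplaceKernel hS,
    laplaceKernel_zero_right, mul_one]

lemma lintegral_laplaceKernel_prodQuadrant [SFinite P]
    (h : IsBivariateLevy P H₁ H₂ S) (hα : 0 ≤ α) (hβ : 0 ≤ β)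
    (hS : 0 < S α β) (hT₁ : 0 < S α 0) (hT₂ : 0 < S 0 β) :
    ∫⁻ z, laplaceKernel α (H₁ z.2.1 z.1) * laplaceKernel β (H₂ z.2.2 z.1) ∂(prodQuadrant P) =
      ENNReal.ofReal (S α β)⁻¹ * (ENNReal.ofReal (S 0 β)⁻¹ + ENNReal.ofReal (S α 0)⁻¹) := by
  have hmeas : Measurable fun z : Ω × ℝ × ℝ ↦
      laplaceKernel α (H₁ z.2.1 z.1) * laplaceKernel β (H₂ z.2.2 z.1) :=
    ((measurable_laplaceKernel α).comp (measurable_comp_time_fst h.measurable_fst)).mul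
      ((measurable_laplaceKernel β).comp (measurable_comp_time_snd h.measurable_snd))
  have hrestrict : ∀ x ∈ Ioi (0 : ℝ),
      (volume.restrict (Ioi 0)).restrict (Ioi x) = volume.restrict (Ioi x) := fun x hx ↦
    Measure.restrict_restrict_of_subset (Ioi_subset_Ioi (le_of_lt hx))
  have hupper : ∫⁻ x in Ioi (0 : ℝ), ∫⁻ y in Ioi x, ∫⁻ ω,
      laplaceKernel α (H₁ x ω) * laplaceKernel β (H₂ y ω) ∂P ∂(volume.restrict (Ioi 0)) =
        ENNReal.ofReal (S α β)⁻¹ * ENNReal.ofReal (S 0 β)⁻¹ := by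
    rw [← h.lintegral_laplaceKernel_triangle hα hβ hS hT₂]
    exact setLIntegral_congr_fun measurableSet_Ioi fun x hx ↦ by simp only [hrestrict x hx]
  have hlower : ∫⁻ y in Ioi (0 : ℝ), ∫⁻ x in Ioi y, ∫⁻ ω,
      laplaceKernel α (H₁ x ω) * laplaceKernel β (H₂ y ω) ∂P ∂(volume.restrict (Ioi 0)) =
        ENNReal.ofReal (S α β)⁻¹ * ENNReal.ofReal (S α 0)⁻¹ := by
    rw [← h.symm.lintegral_laplaceKernel_triangle hβ hα hS hT₁]
    refine setLIntegral_congr_fun measurableSet_Ioi fun y hy ↦ ?_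
    simp only [hrestrict y hy, mul_comm]
  rw [lintegral_prod_symm _ hmeas.aemeasurable,
    lintegral_prod _ hmeas.lintegral_prod_left'.aemeasurable,
    lintegral_lintegral_eq_add_triangles hmeas.lintegral_prod_left', hupper, hlower, mul_add]

end IsBivariateLevy

/-- Double Laplace transform of the mixed moment
`E[L₁(t₁)L₂(t₂)]`, with `T₁(η) = S(η,0)` and `T₂(η) = S(0,η)`. -/
theorem laplace_transform_mixed_moment
    {Ω : Type*} [MeasurableSpace Ω] (P : Measure Ω) [IsProbabilityMeasure P]
    (H1 H2 : ℝ → Ω → ℝ) (S : ℝ → ℝ → ℝ)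
    (hH1meas : Measurable (Function.uncurry H1))
    (hH2meas : Measurable (Function.uncurry H2))
    (hH1nonneg : ∀ x ω, 0 ≤ H1 x ω) (hH2nonneg : ∀ x ω, 0 ≤ H2 x ω)
    (hzero : ∀ᵐ ω ∂P, H1 0 ω = 0 ∧ H2 0 ω = 0)
    (hSnonneg : ∀ α β : ℝ, 0 ≤ α → 0 ≤ β → 0 ≤ S α β)
    (hindep : ∀ s t : ℝ, 0 ≤ s → s ≤ t →
      IndepFun (fun ω => (H1 t ω - H1 s ω, H2 t ω - H2 s ω))
        (fun ω => (H1 s ω, H2 s ω)) P)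
    (hincr : ∀ s t α β : ℝ, 0 ≤ s → s ≤ t → 0 ≤ α → 0 ≤ β →
      ∫ ω, Real.exp (-(α * (H1 t ω - H1 s ω)) - β * (H2 t ω - H2 s ω)) ∂P
        = Real.exp (-(t - s) * S α β))
    (hpath : ∀ᵐ ω ∂P,
      (∀ x y : ℝ, 0 ≤ x → x ≤ y → H1 x ω ≤ H1 y ω) ∧
      (∀ M : ℝ, ∃ x : ℝ, 0 ≤ x ∧ H1 x ω > M) ∧
      (∀ x y : ℝ, 0 ≤ x → x ≤ y → H2 x ω ≤ H2 y ω) ∧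
      (∀ M : ℝ, ∃ x : ℝ, 0 ≤ x ∧ H2 x ω > M))
    (L1 L2 : ℝ → Ω → ℝ)
    (hL1 : ∀ t ω, L1 t ω = sInf {x : ℝ | 0 ≤ x ∧ H1 x ω > t})
    (hL2 : ∀ t ω, L2 t ω = sInf {x : ℝ | 0 ≤ x ∧ H2 x ω > t})
    (η1 η2 : ℝ) (hη1 : 0 < η1) (hη2 : 0 < η2)
    (hT1 : 0 < S η1 0) (hT2 : 0 < S 0 η2) (hS : 0 < S η1 η2) :
    ∫ t1 in Set.Ioi (0 : ℝ), ∫ t2 in Set.Ioi (0 : ℝ),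
        Real.exp (-(η1 * t1) - η2 * t2) * (∫ ω, L1 t1 ω * L2 t2 ω ∂P)
      = (S η1 0 + S 0 η2) / (η1 * η2 * S η1 0 * S 0 η2 * S η1 η2) := by
  have hLevy : IsBivariateLevy P H1 H2 S := ⟨hH1meas, hH2meas, hzero, hindep, hincr⟩
  have hmoment : ∀ t1 t2, ∫ ω, L1 t1 ω * L2 t2 ω ∂P =
      (prodQuadrant P).real {z | H1 z.2.1 z.1 ≤ t1 ∧ H2 z.2.2 z.1 ≤ t2} := by
    intro t1 t2
    simp only [hL1, hL2]
    refine integral_firstPassage_mul_firstPassage hH1meas hH2meas ?_ ?_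
    · exact hpath.mono fun ω h ↦ ⟨fun x hx y _ hxy ↦ h.1 x y hx hxy, h.2.1 t1⟩
    · exact hpath.mono fun ω h ↦ ⟨fun x hx y _ hxy ↦ h.2.2.1 x y hx hxy, h.2.2.2 t2⟩
  have hpotential := hLevy.lintegral_laplaceKernel_prodQuadrant hη1.le hη2.le hS hT1 hT2
  simp only [hmoment]
  rw [integral_exp_mul_measureReal_inter_sublevel hη1 hη2 (measurable_comp_time_fst hH1meas)
    (measurable_comp_time_snd hH2meas) (fun _ ↦ hH1nonneg _ _) (fun _ ↦ hH2nonneg _ _)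
    (by rw [hpotential]; finiteness), hpotential,
    ← ENNReal.ofReal_add (by positivity) (by positivity), ← ENNReal.ofReal_mul (by positivity),
    ENNReal.toReal_ofReal (by positivity)]
  field_simp
end

section
/- For every α ∈ (0,1) and every ξ ∈ ℝ: ∫₀^∞ (e^{iξr} − 1) · α r^{−α−1} dr = −Γ(1−α) · (−iξ)^α, where the integral is an absolutely convergent Lebesgue integral of a complex-valued function, Γ is the Gamma function, and (−iξ)^α denotes the principal branch of the complex power (with 0^α = 0). -/
open Complex

/-!
After the substitution `s = -α`, `w = -iξ` the claim is that the Mellin transform of `e^{-wr} - 1`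
at `s` is `w^{-s} Γ(s)` for `-1 < Re s < 0` and `0 ≤ Re w`. For `w = 1`, integrating by parts
against `r^s` turns the left side into `Γ(s + 1) / s`, and rescaling `r` gives all real `w > 0`.
Both sides are holomorphic in `w` on the open right half-plane and continuous up to the imaginary
axis, so the identity theorem carries the equality to the closed half-plane.
-/

open Filter MeasureTheory Set Topology

theorem diffContOnCl_cpow_const_re_pos {a : ℂ} (ha : 0 < a.re) :
    DiffContOnCl ℂ (fun w : ℂ => w ^ a) {w | 0 < w.re} where
  differentiableOn _ hw := (differentiableAt_id.cpow_const (.inl hw)).differentiableWithinAt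
  continuousOn := by
    rw [closure_setOfPred_lt_re]
    exact fun _ hw => (continuousAt_cpow_const_of_re_pos (.inl hw) ha).continuousWithinAt

theorem eqOn_re_nonneg_of_eq_ofReal_pos {E : Type*} [NormedAddCommGroup E] [NormedSpace ℂ E]
    [CompleteSpace E] {f g : ℂ → E} (hf : DiffContOnCl ℂ f {z | 0 < z.re})
    (hg : DiffContOnCl ℂ g {z | 0 < z.re}) (hfg : ∀ x : ℝ, 0 < x → f x = g x) :
    EqOn f g {z | 0 ≤ z.re} := by
  have isOpen_re_pos : IsOpen {z : ℂ | 0 < z.re} := isOpen_lt continuous_const continuous_re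
  have frequently_eq : ∃ᶠ z in 𝓝[≠] (1 : ℂ), f z = g z := by
    have ofReal_tendsto : Tendsto ((↑) : ℝ → ℂ) (𝓝[≠] 1) (𝓝[≠] 1) := by
      simpa using continuous_ofReal.continuousWithinAt.tendsto_nhdsWithin
        (s := {1}ᶜ) (t := {1}ᶜ) (x := 1) (fun x hx => by simpa using hx)
    refine ofReal_tendsto.frequently (Eventually.frequently ?_)
    filter_upwards [nhdsWithin_le_nhds (lt_mem_nhds zero_lt_one)] with x hx using hfg x hx
  have eqOn_re_pos : EqOn f g {z | 0 < z.re} :=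
    (hf.differentiableOn.analyticOnNhd isOpen_re_pos).eqOn_of_preconnected_of_frequently_eq
      (hg.differentiableOn.analyticOnNhd isOpen_re_pos) (convex_halfSpace_re_gt 0).isPreconnected
      (by simp) frequently_eq
  rw [← closure_setOfPred_lt_re]
  exact eqOn_re_pos.of_subset_closure hf.continuousOn hg.continuousOn subset_closure subset_rfl

theorem norm_exp_sub_one_le_min_of_re_nonpos {z : ℂ} (hz : z.re ≤ 0) :
    ‖exp z - 1‖ ≤ min ‖z‖ 2 := by
  have norm_exp_le_one {x : ℂ} (hx : x.re ≤ 0) : ‖exp x‖ ≤ 1 := by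
    rw [norm_exp]
    exact Real.exp_le_one_iff.mpr hx
  refine le_min ?_ ?_
  · have mean_value := (convex_halfSpace_re_le 0).norm_image_sub_le_of_norm_deriv_le
      (f := exp) (C := 1) (x := 0) (y := z) (fun _ _ => differentiableAt_exp)
      (fun x hx => by simpa only [Complex.deriv_exp] using norm_exp_le_one hx) (by simp) hz
    simpa using mean_value
  · calc ‖exp z - 1‖ ≤ ‖exp z‖ + ‖(1 : ℂ)‖ := norm_sub_le _ _
      _ ≤ 1 + 1 := add_le_add (norm_exp_le_one hz) norm_one.le
      _ = 2 := one_add_one_eq_two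

theorem integrableOn_Ioi_rpow_mul_min {s K c : ℝ} (hs : -1 < s) (hs' : s < 0) (hK : 0 ≤ K)
    (hc : 0 ≤ c) : IntegrableOn (fun r : ℝ => r ^ (s - 1) * min (K * r) c) (Ioi 0) := by
  refine mellin_convergent_of_isBigO_scalar (a := 0) (b := -1) ?_ ?_ hs' ?_ hs
  · have min_continuous : Continuous fun r : ℝ => min (K * r) c := by fun_prop
    exact min_continuous.locallyIntegrable.locallyIntegrableOn _
  · refine .of_bound c ?_
    filter_upwards [eventually_ge_atTop 0] with r hr
    rw [Real.norm_of_nonneg (by positivity), neg_zero, Real.rpow_zero, norm_one, mul_one]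
    exact min_le_right _ _
  · refine .of_bound K ?_
    filter_upwards [self_mem_nhdsWithin] with r hr
    have hr : 0 < r := hr
    rw [Real.norm_of_nonneg (by positivity), neg_neg, Real.rpow_one, Real.norm_of_nonneg hr.le]
    exact min_le_left _ _

section Mellin

variable {s w : ℂ}

variable (s) in
theorem norm_cpow_smul_exp_neg_mul_sub_one_le {K r : ℝ} (hw : 0 ≤ w.re) (hK : ‖w‖ ≤ K)
    (hr : 0 < r) :
    ‖(r : ℂ) ^ s • (exp (-(w * r)) - 1)‖ ≤ r ^ s.re * min (K * r) 2 := by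
  have hre : (-(w * r)).re ≤ 0 := by simpa using mul_nonneg hw hr.le
  have hnorm : ‖-(w * r)‖ ≤ K * r := by
    rw [norm_neg, norm_mul, norm_real, Real.norm_of_nonneg hr.le]
    gcongr
  rw [norm_smul, norm_cpow_eq_rpow_re_of_pos hr]
  gcongr
  exact (norm_exp_sub_one_le_min_of_re_nonpos hre).trans (min_le_min_right 2 hnorm)

variable (s) in
theorem norm_cpow_smul_exp_neg_mul_le {b r : ℝ} (hb : b ≤ w.re) (hr : 0 < r) :
    ‖(r : ℂ) ^ s • exp (-(w * r))‖ ≤ r ^ s.re * Real.exp (-b * r) := by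
  rw [norm_smul, norm_cpow_eq_rpow_re_of_pos hr, norm_exp]
  have hre : (-(w * r)).re ≤ -b * r := by
    simpa using mul_le_mul_of_nonneg_right hb hr.le
  gcongr

theorem mellinConvergent_exp_neg_mul_sub_one (hs : -1 < s.re) (hs' : s.re < 0) (hw : 0 ≤ w.re) :
    MellinConvergent (fun r : ℝ => exp (-(w * r)) - 1) s := by
  refine Integrable.mono' (integrableOn_Ioi_rpow_mul_min hs hs' (norm_nonneg w) zero_le_two)
    (Measurable.aestronglyMeasurable (by fun_prop)) ?_
  filter_upwards [ae_restrict_mem measurableSet_Ioi] with r hr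
  simpa using norm_cpow_smul_exp_neg_mul_sub_one_le (s - 1) hw le_rfl hr

theorem continuousOn_mellin_exp_neg_mul_sub_one (hs : -1 < s.re) (hs' : s.re < 0) :
    ContinuousOn (fun w : ℂ => mellin (fun r : ℝ => exp (-(w * r)) - 1) s) {w | 0 ≤ w.re} := by
  intro w _
  have norm_le : ∀ᶠ z in 𝓝[{z | 0 ≤ z.re}] w, ‖z‖ ≤ ‖w‖ + 1 :=
    nhdsWithin_le_nhds (continuous_norm.continuousAt.eventually_le_const (lt_add_one _))
  refine tendsto_integral_filter_of_dominated_convergence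
    (fun r : ℝ => r ^ (s.re - 1) * min ((‖w‖ + 1) * r) 2)
    (.of_forall fun z => Measurable.aestronglyMeasurable (by fun_prop)) ?_
    (integrableOn_Ioi_rpow_mul_min hs hs' (by positivity) zero_le_two) (.of_forall fun r => ?_)
  · filter_upwards [norm_le, self_mem_nhdsWithin] with z hz hz'
    filter_upwards [ae_restrict_mem measurableSet_Ioi] with r hr
    simpa using norm_cpow_smul_exp_neg_mul_sub_one_le (s - 1) hz' hz hr
  · exact Continuous.continuousWithinAt (by fun_prop)

theorem hasDerivAt_mellin_exp_neg_mul_sub_one (hs : -1 < s.re) (hs' : s.re < 0) (hw : 0 < w.re) :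
    HasDerivAt (fun w : ℂ => mellin (fun r : ℝ => exp (-(w * r)) - 1) s)
      (-mellin (fun r : ℝ => exp (-(w * r))) (s + 1)) w := by
  have half_plane_mem_nhds : {z : ℂ | w.re / 2 < z.re} ∈ 𝓝 w :=
    (isOpen_lt continuous_const continuous_re).mem_nhds (half_lt_self hw)
  have dominant_integrable :
      IntegrableOn (fun r : ℝ => r ^ s.re * Real.exp (-(w.re / 2) * r)) (Ioi 0) := by
    simpa using integrableOn_rpow_mul_exp_neg_mul_rpow hs one_pos (half_pos hw)
  have deriv_integral := (hasDerivAt_integral_of_dominated_loc_of_deriv_le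
    (F := fun (z : ℂ) (r : ℝ) => (r : ℂ) ^ (s - 1) • (exp (-(z * r)) - 1))
    (F' := fun (z : ℂ) (r : ℝ) => -((r : ℂ) ^ s • exp (-(z * r)))) half_plane_mem_nhds
    (.of_forall fun z => Measurable.aestronglyMeasurable (by fun_prop))
    (mellinConvergent_exp_neg_mul_sub_one hs hs' hw.le)
    (Measurable.aestronglyMeasurable (by fun_prop)) ?_ dominant_integrable ?_).2
  · simpa only [mellin, add_sub_cancel_right, integral_neg] using deriv_integral
  · filter_upwards [ae_restrict_mem measurableSet_Ioi] with r hr z hz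
    rw [norm_neg]
    exact norm_cpow_smul_exp_neg_mul_le s (le_of_lt hz) hr
  · filter_upwards [ae_restrict_mem measurableSet_Ioi] with r hr z _
    have deriv_exp : HasDerivAt (fun z : ℂ => exp (-(z * r)) - 1) (exp (-(z * r)) * -r) z := by
      simpa using ((hasDerivAt_id z).mul_const (r : ℂ)).neg.cexp.sub_const 1
    refine (deriv_exp.const_smul ((r : ℂ) ^ (s - 1))).congr_deriv ?_
    have hr0 : (r : ℂ) ≠ 0 := ofReal_ne_zero.mpr (ne_of_gt hr)
    rw [cpow_sub _ _ hr0, cpow_one, smul_eq_mul, smul_eq_mul]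
    field_simp

theorem diffContOnCl_mellin_exp_neg_mul_sub_one (hs : -1 < s.re) (hs' : s.re < 0) :
    DiffContOnCl ℂ (fun w : ℂ => mellin (fun r : ℝ => exp (-(w * r)) - 1) s) {w | 0 < w.re} where
  differentiableOn _ hw :=
    (hasDerivAt_mellin_exp_neg_mul_sub_one hs hs' hw).differentiableAt.differentiableWithinAt
  continuousOn := by
    simpa only [closure_setOfPred_lt_re] using continuousOn_mellin_exp_neg_mul_sub_one hs hs'

theorem tendsto_exp_neg_mul_sub_one_mul_cpow_nhdsGT_zero (hs : -1 < s.re)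
    (hw : 0 ≤ w.re) :
    Tendsto (fun r : ℝ => (exp (-(w * r)) - 1) * (r : ℂ) ^ s) (𝓝[>] 0) (𝓝 0) := by
  have exponent_pos : 0 < s.re + 1 := neg_lt_iff_pos_add.mp hs
  have rpow_tendsto : Tendsto (fun r : ℝ => ‖w‖ * r ^ (s.re + 1)) (𝓝[>] 0) (𝓝 0) :=
    (((Real.continuous_rpow_const exponent_pos.le).const_mul ‖w‖).tendsto' 0 0
      (by rw [Real.zero_rpow exponent_pos.ne', mul_zero])).mono_left nhdsWithin_le_nhds
  refine squeeze_zero_norm' ?_ rpow_tendsto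
  filter_upwards [self_mem_nhdsWithin] with r hr
  have hr : 0 < r := hr
  calc ‖(exp (-(w * r)) - 1) * (r : ℂ) ^ s‖
      ≤ r ^ s.re * min (‖w‖ * r) 2 := by
        rw [mul_comm]
        exact norm_cpow_smul_exp_neg_mul_sub_one_le s hw le_rfl hr
    _ ≤ r ^ s.re * (‖w‖ * r) := by gcongr; exact min_le_left _ _
    _ = ‖w‖ * r ^ (s.re + 1) := by rw [Real.rpow_add_one hr.ne']; ring

theorem tendsto_exp_neg_mul_sub_one_mul_cpow_atTop (hs : s.re < 0) (hw : 0 ≤ w.re) :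
    Tendsto (fun r : ℝ => (exp (-(w * r)) - 1) * (r : ℂ) ^ s) atTop (𝓝 0) := by
  have rpow_tendsto : Tendsto (fun r : ℝ => r ^ s.re * 2) atTop (𝓝 0) := by
    simpa using (tendsto_rpow_neg_atTop (neg_pos.mpr hs)).mul_const 2
  refine squeeze_zero_norm' ?_ rpow_tendsto
  filter_upwards [eventually_gt_atTop 0] with r hr
  calc ‖(exp (-(w * r)) - 1) * (r : ℂ) ^ s‖
      ≤ r ^ s.re * min (‖w‖ * r) 2 := by
        rw [mul_comm]
        exact norm_cpow_smul_exp_neg_mul_sub_one_le s hw le_rfl hr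
    _ ≤ r ^ s.re * 2 := by gcongr; exact min_le_right _ _

theorem mellin_exp_neg_sub_one (hs : -1 < s.re) (hs' : s.re < 0) :
    mellin (fun r : ℝ => exp (-r) - 1) s = Gamma s := by
  have hs0 : s ≠ 0 := by rintro rfl; simp at hs'
  have re_pos : 0 < (s + 1).re := by simpa using neg_lt_iff_pos_add.mp hs
  have exp_sub_one_deriv (r : ℝ) : HasDerivAt (fun r : ℝ => exp (-r) - 1) (-exp (-r)) r := by
    simpa using (hasDerivAt_id r).ofReal_comp.neg.cexp.sub_const 1
  have exp_sub_one_integrable :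
      IntegrableOn (fun r : ℝ => (exp (-r) - 1) * (s * (r : ℂ) ^ (s - 1))) (Ioi 0) :=
    ((mellinConvergent_exp_neg_mul_sub_one hs hs' (w := 1) zero_le_one).const_mul s).congr
      (.of_forall fun r => by simp only [smul_eq_mul, one_mul]; ring)
  have exp_integrable : IntegrableOn (fun r : ℝ => -exp (-r) * (r : ℂ) ^ s) (Ioi 0) :=
    (GammaIntegral_convergent re_pos).neg.congr (.of_forall fun r => by simp)
  have by_parts := integral_Ioi_mul_deriv_eq_deriv_mul (fun r _ => exp_sub_one_deriv r)
    (fun r hr => hasDerivAt_ofReal_cpow_const (ne_of_gt hr) hs0)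
    exp_sub_one_integrable exp_integrable
    (by simpa only [Pi.mul_def, one_mul] using
      tendsto_exp_neg_mul_sub_one_mul_cpow_nhdsGT_zero hs (w := 1) zero_le_one)
    (by simpa only [Pi.mul_def, one_mul] using
      tendsto_exp_neg_mul_sub_one_mul_cpow_atTop hs' (w := 1) zero_le_one)
  refine mul_left_cancel₀ hs0 ?_
  calc s * mellin (fun r : ℝ => exp (-r) - 1) s
      = ∫ r in Ioi (0 : ℝ), (exp (-r) - 1) * (s * (r : ℂ) ^ (s - 1)) := by
        rw [mellin, ← integral_const_mul]
        congr with r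
        rw [smul_eq_mul]
        ring
    _ = GammaIntegral (s + 1) := by
        rw [by_parts, GammaIntegral]
        simp [integral_neg]
    _ = s * Gamma s := by rw [← Gamma_eq_integral re_pos, Gamma_add_one s hs0]

theorem hasMellin_exp_neg_mul_sub_one (hs : -1 < s.re) (hs' : s.re < 0) (hw : 0 ≤ w.re) :
    HasMellin (fun r : ℝ => exp (-(w * r)) - 1) s (w ^ (-s) * Gamma s) := by
  refine ⟨mellinConvergent_exp_neg_mul_sub_one hs hs' hw, ?_⟩
  refine eqOn_re_nonneg_of_eq_ofReal_pos (diffContOnCl_mellin_exp_neg_mul_sub_one hs hs')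
    ((diffContOnCl_cpow_const_re_pos (by simpa using hs')).smul_const (Gamma s)) (fun b hb => ?_) hw
  simpa [mellin_exp_neg_sub_one hs hs'] using
    mellin_comp_mul_left (fun r : ℝ => exp (-r) - 1) s hb

end Mellin

theorem stable_levy_integral_complex_general {α w : ℂ} (hα0 : 0 < α.re) (hα1 : α.re < 1)
    (hw : 0 ≤ w.re) :
    IntegrableOn (fun r : ℝ => (exp (-(w * r)) - 1) * (α * (r : ℂ) ^ (-α - 1))) (Ioi 0) ∧
      ∫ r in Ioi (0 : ℝ), (exp (-(w * r)) - 1) * (α * (r : ℂ) ^ (-α - 1))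
        = -Gamma (1 - α) * w ^ α := by
  have integrand_eq : (fun r : ℝ => (exp (-(w * r)) - 1) * (α * (r : ℂ) ^ (-α - 1))) =
      fun r : ℝ => α * ((r : ℂ) ^ (-α - 1) • (exp (-(w * r)) - 1)) := by
    ext r
    rw [smul_eq_mul]
    ring
  obtain ⟨convergent, value⟩ :=
    hasMellin_exp_neg_mul_sub_one (s := -α) (by simpa using hα1) (by simpa using hα0) hw
  have Gamma_recurrence : Gamma (1 - α) = -α * Gamma (-α) := by
    have neg_ne_zero : -α ≠ 0 := neg_ne_zero.mpr fun h => by simp [h] at hα0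
    rw [← Gamma_add_one _ neg_ne_zero, neg_add_eq_sub]
  rw [integrand_eq]
  refine ⟨convergent.const_mul α, ?_⟩
  rw [integral_const_mul, ← mellin, value, Gamma_recurrence, neg_neg]
  ring

/-- For `α ∈ (0,1)` and `ξ ∈ ℝ`:
`∫₀^∞ (e^{iξr} − 1) α r^{−α−1} dr = −Γ(1−α)(−iξ)^α`, where `(−iξ)^α` is the
principal branch of the complex power (with `0^α = 0`). -/
theorem stable_levy_integral_complex
    (α ξ : ℝ) (hα0 : 0 < α) (hα1 : α < 1) :
    ∫ r in Set.Ioi (0 : ℝ),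
        (Complex.exp (Complex.I * ξ * r) - 1) * ((α * r ^ (-α - 1) : ℝ) : ℂ)
      = -(Real.Gamma (1 - α) : ℂ) * (-(Complex.I * ξ)) ^ (α : ℂ) := by
  have general :=
    (stable_levy_integral_complex_general (α := α) (w := -(I * ξ)) hα0 hα1 (by simp)).2
  rw [← Gamma_ofReal, ofReal_sub, ofReal_one, ← general]
  refine setIntegral_congr_fun measurableSet_Ioi fun r hr => ?_
  simp [ofReal_cpow (le_of_lt hr)]
end
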